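/- Let K be an infinite field, S = K[x_1,...,x_n], and fix an integer j. Let w ∈ Z_{≥0}^n, let M be a finitely generated graded S-module and J ⊆ S a homogeneous ideal. Then for a general λ ∈ K one has dim_K Tor_i^S(M, in_w(J))_j ≥ dim_K Tor_i^S(M, D_{λ,w}(J))_j for all i ≥ 0. -/

import Mathlib

open MvPolynomial TensorProduct CategoryTheory

noncomputable section

/-- The polynomial ring `S = K[x_1,...,x_n]`, standard graded. -/
abbrev PS (K : Type) [Field K] (n : ℕ) : Type := MvPolynomial (Fin n) K

variable (K : Type) [Field K] (n : ℕ)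

/-- An ideal of `S` is homogeneous if it contains all homogeneous components of its
elements. -/
def IsHomog (I : Ideal (PS K n)) : Prop :=
  ∀ f ∈ I, ∀ d : ℕ, MvPolynomial.homogeneousComponent d f ∈ I

/-- The change of coordinates of `S` induced by `g ∈ GL_n(K)`, determined by
`g(x_i) = ∑_j g_{ji} x_j`. -/
def coordChange (g : GL (Fin n) K) : PS K n →ₐ[K] PS K n :=
  MvPolynomial.aeval (fun i => ∑ j, ((g : Matrix (Fin n) (Fin n) K) j i) • MvPolynomial.X j)

/-- A property `P` holds for a general change of coordinates `g ∈ GL_n(K)` if there is a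
nonempty Zariski open subset `U ⊆ GL_n(K)` on which it holds; equivalently (as `GL_n(K)` is
an irreducible variety over the infinite field `K`) there is a nonzero polynomial `F` in the
matrix entries such that `P g` holds whenever `F` does not vanish at `g`. -/
def generally (P : GL (Fin n) K → Prop) : Prop :=
  ∃ F : MvPolynomial (Fin n × Fin n) K, F ≠ 0 ∧
    ∀ g : GL (Fin n) K,
      MvPolynomial.eval (fun p => (g : Matrix (Fin n) (Fin n) K) p.1 p.2) F ≠ 0 → P g

/-- The standard grading of `S = K[x_1,...,x_n]`, extended to `ℤ` (zero in negative
degrees). -/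
def polyGrade (d : ℤ) : Submodule K (PS K n) :=
  if 0 ≤ d then homogeneousSubmodule (Fin n) K d.toNat else ⊥

/-- The degree `d` component of the (internal) tensor-product grading on `A ⊗[K] B`. -/
def tensorGrade {A B : Type} [AddCommGroup A] [Module K A] [AddCommGroup B] [Module K B]
    (GA : ℤ → Submodule K A) (GB : ℤ → Submodule K B) (d : ℤ) :
    Submodule K (A ⊗[K] B) :=
  ⨆ p : ℤ, LinearMap.range (TensorProduct.map (GA p).subtype (GB (d - p)).subtype)

variable (N : Type) [AddCommGroup N] [Module K N] [Module (PS K n) N]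
  [IsScalarTower K (PS K n) N]

/-- The tower of `K`-vector spaces `D_i = S^{⊗ i} ⊗_K N` appearing in the bar complex
`M ⊗_K S^{⊗ i} ⊗_K N`, which computes `Tor^S_i(M, N)`. -/
def barD : ℕ → ModuleCat K
  | 0 => ModuleCat.of K N
  | (i + 1) => ModuleCat.of K (PS K n ⊗[K] (barD i))

/-- The internal `ℤ`-grading on `D_i = S^{⊗ i} ⊗_K N` induced by the standard grading of
`S` and a grading `GN` of `N`. -/
def barDGrade (GN : ℤ → Submodule K N) : (i : ℕ) → ℤ → Submodule K (barD K n N i)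
  | 0 => GN
  | (i + 1) => tensorGrade K (polyGrade K n) (barDGrade GN i)

/-- Scalar multiplication `S → N → N` as a `K`-bilinear map. -/
def smulBilin : PS K n →ₗ[K] N →ₗ[K] N :=
  LinearMap.mk₂ K (fun s x => s • x)
    (fun s₁ s₂ x => add_smul s₁ s₂ x)
    (fun c s x => smul_assoc c s x)
    (fun s x y => smul_add s x y)
    (fun c s x => (smul_comm c s x).symm)

/-- The "contraction" part of the bar differential, `c_i : D_{i+1} → D_i`, defined
recursively by `c_0(s ⊗ x) = s • x` and
`c_{i+1}(s ⊗ s' ⊗ t) = (s s') ⊗ t - s ⊗ c_i(s' ⊗ t)`. -/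
def barC : (i : ℕ) → ((barD K n N (i + 1)) →ₗ[K] (barD K n N i))
  | 0 => TensorProduct.lift (smulBilin K n N)
  | (i + 1) =>
      (TensorProduct.map (LinearMap.mul' K (PS K n)) LinearMap.id).comp
        (TensorProduct.assoc K (PS K n) (PS K n) (barD K n N i)).symm.toLinearMap
      - TensorProduct.map LinearMap.id (barC i)

variable (M : Type) [AddCommGroup M] [Module K M] [Module (PS K n) M]
  [IsScalarTower K (PS K n) M]

/-- Right scalar multiplication `M ⊗[K] S → M` as a `K`-linear map. -/
def smulMapM : M ⊗[K] PS K n →ₗ[K] M :=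
  TensorProduct.lift (LinearMap.mk₂ K (fun m s => s • m)
    (fun m₁ m₂ s => smul_add s m₁ m₂)
    (fun c m s => smul_comm s c m)
    (fun m s₁ s₂ => add_smul s₁ s₂ m)
    (fun c m s => smul_assoc c s m))

/-- The bar differential `b_i : M ⊗ D_{i+1} → M ⊗ D_i`,
`b(m ⊗ s ⊗ t) = (s • m) ⊗ t - m ⊗ c_i(s ⊗ t)`.  The complex
`⋯ → M ⊗_K S^{⊗ i} ⊗_K N → ⋯ → M ⊗_K S ⊗_K N → M ⊗_K N → 0`
is the bar complex `M ⊗_S Bar(S, N)`, whose `i`-th homology is `Tor^S_i(M, N)`;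
it is a complex of graded vector spaces with degree-preserving differentials. -/
def barB (i : ℕ) : (M ⊗[K] (barD K n N (i + 1))) →ₗ[K] (M ⊗[K] (barD K n N i)) :=
  (TensorProduct.map (smulMapM K n M) LinearMap.id).comp
      (TensorProduct.assoc K M (PS K n) (barD K n N i)).symm.toLinearMap
  - TensorProduct.map LinearMap.id (barC K n N i)

/-- `dim_K Tor_i^S(M, N)_j`, the dimension of the degree-`j` component of the graded module
`Tor_i^S(M, N)` for graded modules `M`, `N`: it is computed as the homology of the degree-`j`
strand of the bar complex, namely `dim (ker b_i)_j - dim (im b_{i+1})_j`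
(for `i = 0`, `dim (M ⊗_K N)_j - dim (im b_1)_j`). -/
def torStrandDim (GM : ℤ → Submodule K M) (GN : ℤ → Submodule K N) : ℕ → ℤ → ℕ
  | 0, j =>
      Module.finrank K ↥(tensorGrade K GM (barDGrade K n N GN 0) j) -
        Module.finrank K
          ↥(LinearMap.range (barB K n N M 0) ⊓ tensorGrade K GM (barDGrade K n N GN 0) j)
  | (i + 1), j =>
      Module.finrank K
          ↥(LinearMap.ker (barB K n N M i) ⊓
              tensorGrade K GM (barDGrade K n N GN (i + 1)) j) -
        Module.finrank K
          ↥(LinearMap.range (barB K n N M (i + 1)) ⊓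
              tensorGrade K GM (barDGrade K n N GN (i + 1)) j)

/-- The quotient grading on `S/J`. -/
def quotGrade (J : Ideal (PS K n)) : ℤ → Submodule K (PS K n ⧸ J) := fun d =>
  (polyGrade K n d).map (Ideal.Quotient.mkₐ K J).toLinearMap

/-- The grading on an ideal `I ⊆ S` viewed as an `S`-module. -/
def idealGrade (I : Ideal (PS K n)) : ℤ → Submodule K ↥I := fun d =>
  (polyGrade K n d).comap ((Submodule.subtype I).restrictScalars K)

/-- `dim_K Tor_i^S(S/I, S/J)_j`. -/
def torQQ (I J : Ideal (PS K n)) (i : ℕ) (j : ℤ) : ℕ :=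
  torStrandDim K n (PS K n ⧸ J) (PS K n ⧸ I) (quotGrade K n I) (quotGrade K n J) i j

/-- `dim_K Tor_i^S(I, S/J)_j`. -/
def torIQ (I J : Ideal (PS K n)) (i : ℕ) (j : ℤ) : ℕ :=
  torStrandDim K n (PS K n ⧸ J) ↥I (idealGrade K n I) (quotGrade K n J) i j

/-- A property `P` holds for a general (nonzero) scalar `λ ∈ K` if it holds on a nonempty
Zariski open subset of `K`; equivalently, outside the zero set of some nonzero polynomial.
(Since `{0}` is Zariski closed, it is equivalent to quantify over `λ ∈ Kˣ`.) -/
def generallyScalar (P : Kˣ → Prop) : Prop :=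
  ∃ F : Polynomial K, F ≠ 0 ∧ ∀ l : Kˣ, Polynomial.eval (l : K) F ≠ 0 → P l

/-- The diagonal change of coordinates `D_{λ,w} : x_i ↦ λ^{-w_i} x_i`. -/
def diagCoord (w : Fin n → ℕ) (l : Kˣ) : PS K n →ₐ[K] PS K n :=
  MvPolynomial.aeval (fun i => (((l⁻¹ : Kˣ) : K) ^ (w i)) • MvPolynomial.X i)

/-- The `w`-weight of an exponent vector: `∑ w_i m_i`. -/
def wdeg (w : Fin n → ℕ) (m : Fin n →₀ ℕ) : ℕ := ∑ i, w i * m i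

/-- The initial form `in_w(f)`: the sum of the terms of `f` of maximal `w`-weight. -/
def initialForm (w : Fin n → ℕ) (f : PS K n) : PS K n :=
  ∑ m ∈ f.support.filter (fun m => wdeg n w m = f.support.sup (wdeg n w)),
    MvPolynomial.monomial m (MvPolynomial.coeff m f)

/-- The initial ideal `in_w(I)` of `I` with respect to the weight order given by `w`. -/
def initialIdealW (w : Fin n → ℕ) (I : Ideal (PS K n)) : Ideal (PS K n) :=
  Ideal.span {g | ∃ f ∈ I, g = initialForm K n w f}

section PartN1

section LinAlg

variable {K}
variable {A B : Type} [AddCommGroup A] [Module K A] [AddCommGroup B] [Module K B]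

/-- A grading admitting a homogeneous basis, with degrees bounded below and finitely many
basis elements in each degree. -/
def HB (GA : ℤ → Submodule K A) (a : ℤ) : Prop :=
  ∃ (ι : Type) (deg : ι → ℤ) (b : Module.Basis ι K A), (∀ i, a ≤ deg i) ∧
    (∀ d, {i | deg i = d}.Finite) ∧
    ∀ d, GA d = Submodule.span K (b '' {i | deg i = d})

theorem HB.finite {GA : ℤ → Submodule K A} {a : ℤ} (h : HB GA a) (d : ℤ) :
    FiniteDimensional K (GA d) := by
  obtain ⟨ι, deg, b, -, hf, hs⟩ := h
  rw [hs]
  exact FiniteDimensional.span_of_finite K ((hf d).image _)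

theorem HB.lift {GA : ℤ → Submodule K A} {a : ℤ} (hA : HB GA a)
    {GB : ℤ → Submodule K B} {a' : ℤ} (hB : HB GB a') (f : A →ₗ[K] B)
    (hf : ∀ d, ∀ x ∈ GA d, f x ∈ GB d) (j : ℤ) :
    LinearMap.range f ⊓ GB j = (GA j).map f := by
  apply le_antisymm
  · obtain ⟨ι, deg, b, -, -, hs⟩ := hA
    obtain ⟨ι', deg', b', -, -, hs'⟩ := hB
    let P : A →ₗ[K] A := b.constr K (fun i => if deg i = j then b i else 0)
    let Q : B →ₗ[K] B := b'.constr K (fun i => if deg' i = j then b' i else 0)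
    have hQ1 : ∀ y ∈ GB j, Q y = y := by
      intro y hy
      rw [hs'] at hy
      induction hy using Submodule.span_induction with
      | mem x hx =>
        obtain ⟨i, hi, rfl⟩ := hx
        have hi' : deg' i = j := hi
        simp [Q, hi']
      | zero => simp
      | add x y _ _ hx hy => simp [hx, hy]
      | smul c x _ hx => simp [hx]
    have hQ2 : ∀ d, d ≠ j → ∀ y ∈ GB d, Q y = 0 := by
      intro d hd y hy
      rw [hs'] at hy
      induction hy using Submodule.span_induction with
      | mem x hx =>
        obtain ⟨i, hi, rfl⟩ := hx
        have hi' : deg' i = d := hi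
        simp [Q, hi', hd]
      | zero => simp
      | add x y _ _ hx hy => simp [hx, hy]
      | smul c x _ hx => simp [hx]
    have hbm : ∀ i, b i ∈ GA (deg i) := fun i => by
      rw [hs]; exact Submodule.subset_span ⟨i, rfl, rfl⟩
    have hcomm : Q ∘ₗ f = f ∘ₗ P := by
      apply b.ext
      intro i
      by_cases hi : deg i = j
      · have := hf _ _ (hbm i)
        rw [hi] at this
        simp [P, hi, hQ1 _ this]
      · simp [P, hi, hQ2 _ hi _ (hf _ _ (hbm i))]
    have hP : ∀ x, P x ∈ GA j := by
      intro x
      have : LinearMap.range P ≤ GA j := by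
        rw [Module.Basis.constr_range, Submodule.span_le]
        rintro _ ⟨i, rfl⟩
        by_cases hi : deg i = j
        · simp only [hi, if_true]; exact hi ▸ hbm i
        · simp [hi]
      exact this ⟨x, rfl⟩
    rintro y ⟨⟨x, rfl⟩, hy⟩
    refine ⟨P x, hP x, ?_⟩
    rw [← LinearMap.comp_apply, ← hcomm, LinearMap.comp_apply, hQ1 _ hy]
  · rintro _ ⟨x, hx, rfl⟩
    exact ⟨⟨x, rfl⟩, hf _ _ hx⟩

theorem HB.of_internal {GA : ℤ → Submodule K A} {a : ℤ} (hi : DirectSum.IsInternal GA)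
    (hf : ∀ d, FiniteDimensional K (GA d)) (hb : ∀ d < a, GA d = ⊥) : HB GA a := by
  let v := fun d => Module.finBasis K (GA d)
  refine ⟨Σ d, Fin (Module.finrank K (GA d)), Sigma.fst, hi.collectedBasis v, ?_, ?_, ?_⟩
  · rintro ⟨d, k⟩
    by_contra hlt
    have := hb d (not_le.mp hlt)
    have h0 : Module.finrank K (GA d) = 0 := by rw [this]; simp
    exact (Fin.cast h0 k).elim0
  · intro d
    have : {i : Σ d, Fin (Module.finrank K (GA d)) | i.fst = d} = Set.range (Sigma.mk d) := by
      ext ⟨e, k⟩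
      constructor
      · rintro rfl; exact ⟨k, rfl⟩
      · rintro ⟨k', h⟩; exact (congrArg Sigma.fst h).symm
    rw [this]
    exact Set.finite_range _
  · intro d
    have : (hi.collectedBasis v '' {i | i.fst = d}) = (GA d).subtype '' Set.range (v d) := by
      ext x
      simp only [DirectSum.IsInternal.collectedBasis_coe]
      constructor
      · rintro ⟨⟨e, k⟩, rfl, rfl⟩; exact ⟨_, ⟨k, rfl⟩, rfl⟩
      · rintro ⟨_, ⟨k, rfl⟩, rfl⟩; exact ⟨⟨d, k⟩, rfl, rfl⟩
    rw [this, ← Submodule.map_span, (v d).span_eq, Submodule.map_top, Submodule.range_subtype]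

theorem tensorGrade_le_iff {GA : ℤ → Submodule K A} {GB : ℤ → Submodule K B} {d : ℤ}
    {P : Submodule K (A ⊗[K] B)} :
    tensorGrade K GA GB d ≤ P ↔ ∀ p q, p + q = d → ∀ x ∈ GA p, ∀ y ∈ GB q, x ⊗ₜ[K] y ∈ P := by
  unfold tensorGrade
  rw [iSup_le_iff]
  constructor
  · intro h p q hpq x hx y hy
    obtain rfl : q = d - p := by omega
    exact h p ⟨(⟨x, hx⟩ : GA p) ⊗ₜ (⟨y, hy⟩ : GB (d - p)), by simp⟩
  · rintro h p _ ⟨z, rfl⟩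
    induction z using TensorProduct.induction_on with
    | zero => simp
    | tmul x y => exact h p (d - p) (by omega) x x.2 y y.2
    | add x y hx hy => rw [map_add]; exact P.add_mem hx hy

theorem tmul_mem_tensorGrade {GA : ℤ → Submodule K A} {GB : ℤ → Submodule K B} {d p q : ℤ}
    (h : p + q = d) {x : A} (hx : x ∈ GA p) {y : B} (hy : y ∈ GB q) :
    x ⊗ₜ[K] y ∈ tensorGrade K GA GB d :=
  tensorGrade_le_iff.mp le_rfl p q h x hx y hy

theorem HB.tensor {GA : ℤ → Submodule K A} {a : ℤ} (hA : HB GA a)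
    {GB : ℤ → Submodule K B} {a' : ℤ} (hB : HB GB a') :
    HB (tensorGrade K GA GB) (a + a') := by
  obtain ⟨ι, deg, b, hl, hf, hs⟩ := hA
  obtain ⟨ι', deg', b', hl', hf', hs'⟩ := hB
  have hbm : ∀ i, b i ∈ GA (deg i) := fun i => by
    rw [hs]; exact Submodule.subset_span ⟨i, rfl, rfl⟩
  have hbm' : ∀ i, b' i ∈ GB (deg' i) := fun i => by
    rw [hs']; exact Submodule.subset_span ⟨i, rfl, rfl⟩
  refine ⟨ι × ι', fun p => deg p.1 + deg' p.2, b.tensorProduct b', ?_, ?_, ?_⟩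
  · rintro ⟨i, i'⟩; exact add_le_add (hl i) (hl' i')
  · intro d
    have : {p : ι × ι' | deg p.1 + deg' p.2 = d} ⊆
        (⋃ e ∈ Set.Icc a (d - a'), {i | deg i = e}) ×ˢ
        (⋃ e ∈ Set.Icc a' (d - a), {i | deg' i = e}) := by
      rintro ⟨i, i'⟩ h
      have h' : deg i + deg' i' = d := h
      have := hl i
      have := hl' i'
      simp only [Set.mem_prod, Set.mem_iUnion, Set.mem_ofPred_eq, Set.mem_Icc]
      exact ⟨⟨deg i, ⟨by omega, by omega⟩, rfl⟩, ⟨deg' i', ⟨by omega, by omega⟩, rfl⟩⟩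
    refine Set.Finite.subset (Set.Finite.prod ?_ ?_) this
    · exact (Set.finite_Icc _ _).biUnion fun e _ => hf e
    · exact (Set.finite_Icc _ _).biUnion fun e _ => hf' e
  · intro d
    apply le_antisymm
    · rw [tensorGrade_le_iff]
      intro p q hpq x hx y hy
      rw [hs] at hx
      rw [hs'] at hy
      have h2 := Submodule.apply_mem_map₂ (TensorProduct.mk K A B) hx hy
      rw [Submodule.map₂_span_span] at h2
      refine Submodule.span_mono ?_ h2
      rintro _ ⟨_, ⟨i, hi, rfl⟩, _, ⟨i', hi', rfl⟩, rfl⟩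
      refine ⟨(i, i'), ?_, by simp⟩
      have h1 : deg i = p := hi
      have h1' : deg' i' = q := hi'
      simp only [Set.mem_ofPred_eq]
      omega
    · rw [Submodule.span_le]
      rintro _ ⟨⟨i, i'⟩, h, rfl⟩
      rw [Module.Basis.tensorProduct_apply]
      exact tmul_mem_tensorGrade h (hbm i) (hbm' i')

theorem iSupIndep_comap_of_injective {ι : Type} {GA : ι → Submodule K A} (h : iSupIndep GA)
    (f : B →ₗ[K] A) (hf : Function.Injective f) : iSupIndep (fun d => (GA d).comap f) := by
  classical
  intro i
  rw [Submodule.disjoint_def]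
  intro x hx hx'
  have h1 := Submodule.disjoint_def.mp (h i) (f x) hx
  apply hf
  rw [map_zero]
  apply h1
  have h2 : (⨆ (j) (_ : j ≠ i), (GA j).comap f) ≤ (⨆ (j) (_ : j ≠ i), GA j).comap f := by
    refine iSup₂_le fun j hj => Submodule.comap_mono ?_
    exact le_iSup₂_of_le j hj le_rfl
  exact h2 hx'

/-- Polynomial families of vectors. -/
def PolyFam (A : Type) [AddCommGroup A] [Module K A] : Submodule K (K → A) :=
  Submodule.span K {u | ∃ (k : ℕ) (v : A), u = fun l => l ^ k • v}

theorem PolyFam.map (f : A →ₗ[K] B) {u : K → A} (hu : u ∈ PolyFam (K := K) A) :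
    (fun l => f (u l)) ∈ PolyFam (K := K) B := by
  induction hu using Submodule.span_induction with
  | mem x hx =>
    obtain ⟨k, v, rfl⟩ := hx
    exact Submodule.subset_span ⟨k, f v, by simp⟩
  | zero => simp only [Pi.zero_apply, map_zero]; exact (PolyFam (K := K) B).zero_mem
  | add x y _ _ hx hy => simp only [Pi.add_apply, map_add]; exact (PolyFam (K := K) B).add_mem hx hy
  | smul c x _ hx => simp only [Pi.smul_apply, map_smul]; exact (PolyFam (K := K) B).smul_mem c hx

theorem PolyFam.eval (f : A →ₗ[K] K) {u : K → A} (hu : u ∈ PolyFam (K := K) A) :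
    ∃ p : Polynomial K, ∀ l, f (u l) = p.eval l := by
  induction hu using Submodule.span_induction with
  | mem x hx =>
    obtain ⟨k, v, rfl⟩ := hx
    exact ⟨Polynomial.X ^ k * Polynomial.C (f v), by intro l; simp; ring⟩
  | zero => exact ⟨0, by simp⟩
  | add x y _ _ hx hy =>
    obtain ⟨p, hp⟩ := hx
    obtain ⟨q, hq⟩ := hy
    exact ⟨p + q, by simp [hp, hq]⟩
  | smul c x _ hx =>
    obtain ⟨p, hp⟩ := hx
    exact ⟨Polynomial.C c * p, by simp [hp]⟩

theorem semicont (T : K → (A →ₗ[K] B)) (hT : ∀ x, (fun l => T l x) ∈ PolyFam (K := K) B)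
    (P : Submodule K A) [FiniteDimensional K P] :
    ∃ F : Polynomial K, F ≠ 0 ∧ ∀ l, F.eval l ≠ 0 →
      Module.finrank K (P.map (T 0)) ≤ Module.finrank K (P.map (T l)) := by
  classical
  set r := Module.finrank K (P.map (T 0)) with hr
  let y := Module.finBasis K (P.map (T 0))
  have hy : LinearIndependent K (fun k : Fin r => (y k : B)) :=
    y.linearIndependent.map' (P.map (T 0)).subtype (Submodule.ker_subtype _)
  have hx : ∀ k : Fin r, ∃ x ∈ P, T 0 x = y k := fun k => (y k).2
  choose x hxP hx using hx
  obtain ⟨Φ, hΦ⟩ := (Fintype.linearCombination K (fun k : Fin r => (y k : B))).exists_leftInverse_of_injective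
    (LinearMap.ker_eq_bot.mpr (by
      rw [linearIndependent_iff_injective_fintypeLinearCombination] at hy
      exact hy))
  have hΦy : ∀ k, Φ (y k) = Pi.single k 1 := by
    intro k
    have := LinearMap.congr_fun hΦ (Pi.single k 1)
    simpa [Fintype.linearCombination_apply_single] using this
  have hp : ∀ k m : Fin r, ∃ p : Polynomial K, ∀ l, Φ (T l (x k)) m = p.eval l := by
    intro k m
    exact PolyFam.eval ((LinearMap.proj m).comp Φ) (hT (x k))
  choose p hp using hp
  let Mx : Matrix (Fin r) (Fin r) (Polynomial K) := Matrix.of p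
  have hdet : ∀ l, Mx.det.eval l = (Matrix.of fun k => Φ (T l (x k))).det := by
    intro l
    rw [← Polynomial.coe_evalRingHom, RingHom.map_det]
    congr 1
    ext k m
    simp [Mx, hp]
  refine ⟨Mx.det, ?_, ?_⟩
  · intro h0
    have h1 := hdet 0
    rw [h0] at h1
    have : (Matrix.of fun k => Φ (T 0 (x k))) = (1 : Matrix (Fin r) (Fin r) K) := by
      ext k m
      simp [hx, hΦy, Matrix.one_apply, Pi.single_apply, eq_comm]
    rw [this] at h1
    simp at h1
  · intro l hl
    rw [hdet] at hl
    have hu : IsUnit (Matrix.of fun k => Φ (T l (x k))) :=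
      (Matrix.isUnit_iff_isUnit_det _).mpr (isUnit_iff_ne_zero.mpr hl)
    have hrow := Matrix.linearIndependent_rows_iff_isUnit.mpr hu
    have hli : LinearIndependent K (fun k => T l (x k)) :=
      LinearIndependent.of_comp Φ hrow
    have hli' : LinearIndependent K
        (fun k => (⟨T l (x k), ⟨x k, hxP k, rfl⟩⟩ : P.map (T l))) :=
      LinearIndependent.of_comp (P.map (T l)).subtype hli
    simpa using hli'.fintype_card_le_finrank

end LinAlg

end PartN1

section PartN2

section BarAlg

variable {K} {n}

variable {N : Type} [AddCommGroup N] [Module K N] [Module (PS K n) N]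
  [IsScalarTower K (PS K n) N]
variable {N' : Type} [AddCommGroup N'] [Module K N'] [Module (PS K n) N']
  [IsScalarTower K (PS K n) N']
variable {M : Type} [AddCommGroup M] [Module K M] [Module (PS K n) M]
  [IsScalarTower K (PS K n) M]
variable {M' : Type} [AddCommGroup M'] [Module K M'] [Module (PS K n) M']
  [IsScalarTower K (PS K n) M']
variable {D D' : Type} [AddCommGroup D] [Module K D] [AddCommGroup D'] [Module K D']

/-- Abstract step of `barC`. -/
def stepC (c : PS K n ⊗[K] D →ₗ[K] D) : PS K n ⊗[K] (PS K n ⊗[K] D) →ₗ[K] PS K n ⊗[K] D :=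
  (TensorProduct.map (LinearMap.mul' K (PS K n)) LinearMap.id).comp
        (TensorProduct.assoc K (PS K n) (PS K n) D).symm.toLinearMap
      - TensorProduct.map LinearMap.id c

/-- Abstract form of `barB`. -/
def bOp (M : Type) [AddCommGroup M] [Module K M] [Module (PS K n) M]
    [IsScalarTower K (PS K n) M] (c : PS K n ⊗[K] D →ₗ[K] D) :
    M ⊗[K] (PS K n ⊗[K] D) →ₗ[K] M ⊗[K] D :=
  (TensorProduct.map (smulMapM K n M) LinearMap.id).comp
      (TensorProduct.assoc K M (PS K n) D).symm.toLinearMap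
  - TensorProduct.map LinearMap.id c

theorem barC_zero : barC K n N 0 = TensorProduct.lift (smulBilin K n N) := rfl
theorem barC_succ (i : ℕ) : barC K n N (i + 1) = stepC (barC K n N i) := rfl
theorem barB_eq (i : ℕ) : barB K n N M i = bOp M (barC K n N i) := rfl

theorem stepC_tmul (c : PS K n ⊗[K] D →ₗ[K] D) (s s' : PS K n) (t : D) :
    stepC c (s ⊗ₜ (s' ⊗ₜ t)) = (s * s') ⊗ₜ t - s ⊗ₜ c (s' ⊗ₜ t) := by
  simp [stepC]

theorem bOp_tmul (c : PS K n ⊗[K] D →ₗ[K] D) (m : M) (s : PS K n) (t : D) :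
    bOp M c (m ⊗ₜ (s ⊗ₜ t)) = (s • m) ⊗ₜ t - m ⊗ₜ c (s ⊗ₜ t) := by
  simp [bOp, smulMapM]

theorem stepC_stepC (c : PS K n ⊗[K] D →ₗ[K] D) (h : ∀ x, c (stepC c x) = 0) :
    ∀ x, stepC c (stepC (stepC c) x) = 0 := by
  have : stepC c ∘ₗ stepC (stepC c) = 0 := by
    apply TensorProduct.ext'
    intro s y
    induction y using TensorProduct.induction_on with
    | zero => simp
    | add x y hx hy => rw [TensorProduct.tmul_add, map_add, hx, hy, map_add]
    | tmul s' z =>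
    induction z using TensorProduct.induction_on with
    | zero => simp
    | add x y hx hy =>
      rw [TensorProduct.tmul_add, TensorProduct.tmul_add, map_add, hx, hy, map_add]
    | tmul s'' t =>
    have h1 : c ((s' * s'') ⊗ₜ t) = c (s' ⊗ₜ c (s'' ⊗ₜ t)) := by
      have := h (s' ⊗ₜ (s'' ⊗ₜ t))
      rw [stepC_tmul, map_sub, sub_eq_zero] at this
      exact this
    simp only [LinearMap.comp_apply, stepC_tmul, map_sub, TensorProduct.tmul_sub,
      LinearMap.zero_apply, h1, mul_assoc]
    abel
  intro x
  exact LinearMap.congr_fun this x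

theorem lift_smul_stepC : ∀ x, TensorProduct.lift (smulBilin K n N)
    (stepC (TensorProduct.lift (smulBilin K n N)) x) = 0 := by
  have : TensorProduct.lift (smulBilin K n N) ∘ₗ
    (stepC (TensorProduct.lift (smulBilin K n N))) = 0 := by
    apply TensorProduct.ext'
    intro s y
    induction y using TensorProduct.induction_on with
    | zero => simp
    | add x y hx hy => rw [TensorProduct.tmul_add, map_add, hx, hy, map_add]
    | tmul s' z => simp [stepC_tmul, smulBilin, mul_smul]
  intro x
  exact LinearMap.congr_fun this x

theorem barC_barC (i : ℕ) : ∀ x, barC K n N i (stepC (barC K n N i) x) = 0 := by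
  induction i with
  | zero =>
    have h := lift_smul_stepC (K := K) (n := n) (N := N)
    exact h
  | succ i ih => exact stepC_stepC _ ih

theorem bOp_bOp (c : PS K n ⊗[K] D →ₗ[K] D) (h : ∀ x, c (stepC c x) = 0) :
    ∀ x, bOp M c (bOp M (stepC c) x) = 0 := by
  have : bOp M c ∘ₗ bOp M (stepC c) = 0 := by
    apply TensorProduct.ext'
    intro s y
    induction y using TensorProduct.induction_on with
    | zero => simp
    | add x y hx hy => rw [TensorProduct.tmul_add, map_add, hx, hy, map_add]
    | tmul s' z =>
    induction z using TensorProduct.induction_on with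
    | zero => simp
    | add x y hx hy =>
      rw [TensorProduct.tmul_add, TensorProduct.tmul_add, map_add, hx, hy, map_add]
    | tmul s'' t =>
    have h1 : c ((s' * s'') ⊗ₜ t) = c (s' ⊗ₜ c (s'' ⊗ₜ t)) := by
      have := h (s' ⊗ₜ (s'' ⊗ₜ t))
      rw [stepC_tmul, map_sub, sub_eq_zero] at this
      exact this
    simp only [LinearMap.comp_apply, stepC_tmul, bOp_tmul, map_sub, TensorProduct.tmul_sub,
      LinearMap.zero_apply, h1, smul_smul, mul_comm s'' s']
    abel
  intro x
  exact LinearMap.congr_fun this x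

theorem barB_barB (i : ℕ) (x) : barB K n N M i (barB K n N M (i + 1) x) = 0 :=
  bOp_bOp _ (barC_barC i) x

/-- naturality in `M` -/
theorem bOp_natural (c : PS K n ⊗[K] D →ₗ[K] D) (f : M →ₗ[K] M')
    (hf : ∀ (s : PS K n) m, f (s • m) = s • f m) (x) :
    bOp M' c (TensorProduct.map f LinearMap.id x) = TensorProduct.map f LinearMap.id (bOp M c x) := by
  have : bOp M' c ∘ₗ TensorProduct.map f LinearMap.id =
      TensorProduct.map f LinearMap.id ∘ₗ bOp M c := by
    apply TensorProduct.ext'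
    intro s y
    induction y using TensorProduct.induction_on with
    | zero => simp
    | add x y hx hy => rw [TensorProduct.tmul_add, map_add, hx, hy, map_add]
    | tmul s' z => simp [bOp_tmul, hf]
  exact LinearMap.congr_fun this x

/-- naturality in the coefficient -/
theorem bOp_natural' (c : PS K n ⊗[K] D →ₗ[K] D) (c' : PS K n ⊗[K] D' →ₗ[K] D') (f : D →ₗ[K] D')
    (hf : ∀ x, f (c x) = c' (TensorProduct.map LinearMap.id f x)) (x) :
    TensorProduct.map LinearMap.id f (bOp M c x) =
      bOp M c' (TensorProduct.map LinearMap.id (TensorProduct.map LinearMap.id f) x) := by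
  have : TensorProduct.map LinearMap.id f ∘ₗ bOp M c =
      bOp M c' ∘ₗ (TensorProduct.map LinearMap.id (TensorProduct.map LinearMap.id f)) := by
    apply TensorProduct.ext'
    intro s y
    induction y using TensorProduct.induction_on with
    | zero => simp
    | add x y hx hy => rw [TensorProduct.tmul_add, map_add, hx, hy, map_add]
    | tmul s' z => simp [bOp_tmul, hf]
  exact LinearMap.congr_fun this x

theorem stepC_natural (c : PS K n ⊗[K] D →ₗ[K] D) (c' : PS K n ⊗[K] D' →ₗ[K] D') (f : D →ₗ[K] D')
    (hf : ∀ x, f (c x) = c' (TensorProduct.map LinearMap.id f x)) (x) :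
    TensorProduct.map LinearMap.id f (stepC c x) =
      stepC c' (TensorProduct.map LinearMap.id (TensorProduct.map LinearMap.id f) x) := by
  have : TensorProduct.map LinearMap.id f ∘ₗ stepC c =
      stepC c' ∘ₗ (TensorProduct.map LinearMap.id (TensorProduct.map LinearMap.id f)) := by
    apply TensorProduct.ext'
    intro s y
    induction y using TensorProduct.induction_on with
    | zero => simp
    | add x y hx hy => rw [TensorProduct.tmul_add, map_add, hx, hy, map_add]
    | tmul s' z => simp [stepC_tmul, hf]
  exact LinearMap.congr_fun this x

/-- The map induced on `D_i` by a linear map on coefficients. -/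
def barMap (f : N →ₗ[K] N') : (i : ℕ) → (barD K n N i →ₗ[K] barD K n N' i)
  | 0 => f
  | (i + 1) => (TensorProduct.map LinearMap.id (barMap f i) :
      PS K n ⊗[K] (barD K n N i) →ₗ[K] PS K n ⊗[K] (barD K n N' i))

theorem barMap_barC (f : N →ₗ[K] N') (hf : ∀ (s : PS K n) m, f (s • m) = s • f m) (i : ℕ) :
    ∀ x, barMap f i (barC K n N i x) =
      barC K n N' i (TensorProduct.map LinearMap.id (barMap (n := n) f i) x) := by
  induction i with
  | zero =>
    have : f ∘ₗ TensorProduct.lift (smulBilin K n N) =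
        TensorProduct.lift (smulBilin K n N') ∘ₗ TensorProduct.map LinearMap.id f := by
      apply TensorProduct.ext'
      intro s y
      simp [smulBilin, hf]
    exact LinearMap.congr_fun this
  | succ i ih => exact stepC_natural _ _ _ ih

/-- The map induced on `M ⊗ D_i` by a linear map on coefficients. -/
def bm (M : Type) [AddCommGroup M] [Module K M] (f : N →ₗ[K] N') (i : ℕ) :
    M ⊗[K] barD K n N i →ₗ[K] M ⊗[K] barD K n N' i :=
  TensorProduct.map LinearMap.id (barMap f i)

theorem bm_barB (f : N →ₗ[K] N') (hf : ∀ (s : PS K n) m, f (s • m) = s • f m) (i : ℕ) (x) :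
    bm M f i (barB K n N M i x) = barB K n N' M i (bm M f (i + 1) x) :=
  bOp_natural' _ _ _ (barMap_barC f hf i) x

end BarAlg

end PartN2

section PartN3

section BarGraded

variable {K} {n}

variable {N : Type} [AddCommGroup N] [Module K N]
variable {N' : Type} [AddCommGroup N'] [Module K N']
variable {N'' : Type} [AddCommGroup N''] [Module K N'']
variable {M : Type} [AddCommGroup M] [Module K M]
variable {D D' : Type} [AddCommGroup D] [Module K D] [AddCommGroup D'] [Module K D']

theorem map_tensorGrade {A B A' B' : Type} [AddCommGroup A] [Module K A] [AddCommGroup B]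
    [Module K B] [AddCommGroup A'] [Module K A'] [AddCommGroup B'] [Module K B']
    {GA : ℤ → Submodule K A} {GB : ℤ → Submodule K B}
    {GA' : ℤ → Submodule K A'} {GB' : ℤ → Submodule K B'} (f : A →ₗ[K] A') (g : B →ₗ[K] B')
    (hf : ∀ d, ∀ x ∈ GA d, f x ∈ GA' d) (hg : ∀ d, ∀ x ∈ GB d, g x ∈ GB' d) (d : ℤ) :
    ∀ x ∈ tensorGrade K GA GB d, TensorProduct.map f g x ∈ tensorGrade K GA' GB' d := by
  change tensorGrade K GA GB d ≤ (tensorGrade K GA' GB' d).comap (TensorProduct.map f g)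
  rw [tensorGrade_le_iff]
  intro p q h x hx y hy
  exact tmul_mem_tensorGrade h (hf _ _ hx) (hg _ _ hy)

theorem barMap_id (i : ℕ) : barMap (n := n) (LinearMap.id : N →ₗ[K] N) i = LinearMap.id := by
  induction i with
  | zero => rfl
  | succ i ih =>
    change TensorProduct.map LinearMap.id (barMap (n := n) (LinearMap.id : N →ₗ[K] N) i) = _
    rw [ih]; exact TensorProduct.map_id

theorem barMap_comp (g : N' →ₗ[K] N'') (f : N →ₗ[K] N') (i : ℕ) :
    barMap (n := n) (g ∘ₗ f) i = barMap g i ∘ₗ barMap f i := by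
  induction i with
  | zero => rfl
  | succ i ih =>
    change TensorProduct.map LinearMap.id (barMap (n := n) (g ∘ₗ f) i) =
      TensorProduct.map LinearMap.id (barMap (n := n) g i) ∘ₗ
        TensorProduct.map LinearMap.id (barMap (n := n) f i)
    rw [ih, ← TensorProduct.map_comp]; rfl

theorem bm_id (i : ℕ) : bm (n := n) M (LinearMap.id : N →ₗ[K] N) i = LinearMap.id := by
  unfold bm; rw [barMap_id]; exact TensorProduct.map_id

theorem bm_comp (g : N' →ₗ[K] N'') (f : N →ₗ[K] N') (i : ℕ) :
    bm (n := n) M (g ∘ₗ f) i = bm M g i ∘ₗ bm M f i := by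
  unfold bm; rw [barMap_comp, ← TensorProduct.map_comp]; rfl

theorem bm_injective (f : N →ₗ[K] N') (hf : Function.Injective f) (i : ℕ) :
    Function.Injective (bm (n := n) M f i) := by
  obtain ⟨g, hg⟩ := f.exists_leftInverse_of_injective (LinearMap.ker_eq_bot.mpr hf)
  have h : bm (n := n) M g i ∘ₗ bm M f i = LinearMap.id := by
    rw [← bm_comp, hg, bm_id]
  intro x y hxy
  have := congrArg (bm (n := n) M g i) hxy
  rwa [← LinearMap.comp_apply, ← LinearMap.comp_apply, h] at this

theorem barMap_grade {GN : ℤ → Submodule K N} {GN' : ℤ → Submodule K N'} (f : N →ₗ[K] N')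
    (hf : ∀ d, ∀ x ∈ GN d, f x ∈ GN' d) (i : ℕ) :
    ∀ d, ∀ x ∈ barDGrade K n N GN i d, barMap f i x ∈ barDGrade K n N' GN' i d := by
  induction i with
  | zero => exact hf
  | succ i ih =>
    intro d x hx
    exact map_tensorGrade LinearMap.id (barMap f i) (fun _ _ h => h) ih d x hx

theorem bm_grade {GN : ℤ → Submodule K N} {GN' : ℤ → Submodule K N'} (GM : ℤ → Submodule K M)
    (f : N →ₗ[K] N')
    (hf : ∀ d, ∀ x ∈ GN d, f x ∈ GN' d) (i : ℕ) :
    ∀ d, ∀ x ∈ tensorGrade K GM (barDGrade K n N GN i) d,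
      bm M f i x ∈ tensorGrade K GM (barDGrade K n N' GN' i) d := by
  intro d x hx
  exact map_tensorGrade LinearMap.id (barMap f i) (fun _ _ h => h) (barMap_grade f hf i) d x hx

theorem polyFam_tensor (T : K → (D →ₗ[K] D')) (hT : ∀ x, (fun l => T l x) ∈ PolyFam (K := K) D') :
    ∀ x : M ⊗[K] D, (fun l => TensorProduct.map LinearMap.id (T l) x) ∈
      PolyFam (K := K) (M ⊗[K] D') := by
  intro x
  induction x using TensorProduct.induction_on with
  | zero => simp only [map_zero]; exact (PolyFam (K := K) _).zero_mem
  | add x y hx hy => simp only [map_add]; exact (PolyFam (K := K) _).add_mem hx hy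
  | tmul m y =>
    simp only [TensorProduct.map_tmul, LinearMap.id_apply]
    exact PolyFam.map (TensorProduct.mk K M D' m) (hT y)

theorem polyFam_barMap (T : K → (N →ₗ[K] N')) (hT : ∀ x, (fun l => T l x) ∈ PolyFam (K := K) N')
    (i : ℕ) : ∀ x, (fun l => barMap (n := n) (T l) i x) ∈ PolyFam (K := K) (barD K n N' i) := by
  induction i with
  | zero => exact hT
  | succ i ih => exact polyFam_tensor _ ih

theorem polyFam_bm (T : K → (N →ₗ[K] N')) (hT : ∀ x, (fun l => T l x) ∈ PolyFam (K := K) N')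
    (i : ℕ) : ∀ x, (fun l => bm (n := n) M (T l) i x) ∈
      PolyFam (K := K) (M ⊗[K] barD K n N' i) :=
  polyFam_tensor _ (polyFam_barMap T hT i)

end BarGraded

section BarGraded2

variable {K} {n}

/-- Compatibility of a grading with the action of the polynomial ring. -/
def GrComp {M : Type} [AddCommGroup M] [Module K M] [Module (PS K n) M]
    (GM : ℤ → Submodule K M) : Prop :=
  ∀ (a b : ℤ) (s : PS K n) (x : M), s ∈ polyGrade K n a → x ∈ GM b → s • x ∈ GM (a + b)

variable {N : Type} [AddCommGroup N] [Module K N] [Module (PS K n) N]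
  [IsScalarTower K (PS K n) N]
variable {M : Type} [AddCommGroup M] [Module K M] [Module (PS K n) M]
  [IsScalarTower K (PS K n) M]
variable {D D' : Type} [AddCommGroup D] [Module K D] [AddCommGroup D'] [Module K D']

theorem polyGrade_mul {a b : ℤ} {s t : PS K n} (hs : s ∈ polyGrade K n a)
    (ht : t ∈ polyGrade K n b) : s * t ∈ polyGrade K n (a + b) := by
  unfold polyGrade at *
  by_cases ha : 0 ≤ a
  · by_cases hb : 0 ≤ b
    · rw [if_pos ha] at hs
      rw [if_pos hb] at ht
      rw [if_pos (by omega), Int.toNat_add ha hb]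
      exact IsHomogeneous.mul hs ht
    · rw [if_neg hb] at ht
      rw [(Submodule.mem_bot K).mp ht, mul_zero]
      exact Submodule.zero_mem _
  · rw [if_neg ha] at hs
    rw [(Submodule.mem_bot K).mp hs, zero_mul]
    exact Submodule.zero_mem _

theorem bOp_grade {GM : ℤ → Submodule K M} (hM : GrComp (n := n) GM) {GD : ℤ → Submodule K D}
    (c : PS K n ⊗[K] D →ₗ[K] D)
    (hc : ∀ d, ∀ x ∈ tensorGrade K (polyGrade K n) GD d, c x ∈ GD d) :
    ∀ d, ∀ x ∈ tensorGrade K GM (tensorGrade K (polyGrade K n) GD) d,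
      bOp M c x ∈ tensorGrade K GM GD d := by
  intro d
  change tensorGrade K GM (tensorGrade K (polyGrade K n) GD) d ≤
    (tensorGrade K GM GD d).comap (bOp M c)
  rw [tensorGrade_le_iff]
  intro p q hpq m hm y hy
  have : tensorGrade K (polyGrade K n) GD q ≤
      ((tensorGrade K GM GD d).comap (bOp M c)).comap (TensorProduct.mk K M _ m) := by
    rw [tensorGrade_le_iff]
    intro a b hab s hs t ht
    simp only [Submodule.mem_comap, TensorProduct.mk_apply, bOp_tmul]
    refine Submodule.sub_mem _ ?_ ?_
    · exact tmul_mem_tensorGrade (by omega) (hM a p s m hs hm) ht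
    · exact tmul_mem_tensorGrade hpq hm (hc _ _ (tmul_mem_tensorGrade hab hs ht))
  exact this hy

theorem stepC_grade {GD : ℤ → Submodule K D}
    (c : PS K n ⊗[K] D →ₗ[K] D)
    (hc : ∀ d, ∀ x ∈ tensorGrade K (polyGrade K n) GD d, c x ∈ GD d) :
    ∀ d, ∀ x ∈ tensorGrade K (polyGrade K n) (tensorGrade K (polyGrade K n) GD) d,
      stepC c x ∈ tensorGrade K (polyGrade K n) GD d := by
  intro d
  change tensorGrade K (polyGrade K n) (tensorGrade K (polyGrade K n) GD) d ≤
    (tensorGrade K (polyGrade K n) GD d).comap (stepC c)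
  rw [tensorGrade_le_iff]
  intro p q hpq m hm y hy
  have : tensorGrade K (polyGrade K n) GD q ≤
      ((tensorGrade K (polyGrade K n) GD d).comap (stepC c)).comap
        (TensorProduct.mk K (PS K n) _ m) := by
    rw [tensorGrade_le_iff]
    intro a b hab s hs t ht
    simp only [Submodule.mem_comap, TensorProduct.mk_apply, stepC_tmul]
    refine Submodule.sub_mem _ ?_ ?_
    · exact tmul_mem_tensorGrade (by omega) (polyGrade_mul hm hs) ht
    · exact tmul_mem_tensorGrade hpq hm (hc _ _ (tmul_mem_tensorGrade hab hs ht))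
  exact this hy

theorem barC_grade {GN : ℤ → Submodule K N} (hN : GrComp (n := n) GN) (i : ℕ) :
    ∀ d, ∀ x ∈ tensorGrade K (polyGrade K n) (barDGrade K n N GN i) d,
      barC K n N i x ∈ barDGrade K n N GN i d := by
  induction i with
  | zero =>
    intro d
    change tensorGrade K (polyGrade K n) GN d ≤
      (GN d).comap (TensorProduct.lift (smulBilin K n N))
    rw [tensorGrade_le_iff]
    intro p q hpq s hs x hx
    subst hpq
    exact hN p q s x hs hx
  | succ i ih => exact stepC_grade _ ih

theorem barB_grade {GM : ℤ → Submodule K M} (hM : GrComp (n := n) GM)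
    {GN : ℤ → Submodule K N} (hN : GrComp (n := n) GN) (i : ℕ) :
    ∀ d, ∀ x ∈ tensorGrade K GM (barDGrade K n N GN (i + 1)) d,
      barB K n N M i x ∈ tensorGrade K GM (barDGrade K n N GN i) d :=
  bOp_grade hM _ (barC_grade hN i)

end BarGraded2

end PartN3

section PartN4

section Vanish

variable {K} {n}

variable {N : Type} [AddCommGroup N] [Module K N] [Module (PS K n) N]
  [IsScalarTower K (PS K n) N]

theorem barDGrade_neg {GN : ℤ → Submodule K N} (hN0 : ∀ d < 0, GN d = ⊥) (i : ℕ) :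
    ∀ d < 0, barDGrade K n N GN i d = ⊥ := by
  induction i with
  | zero => exact hN0
  | succ i ih =>
    intro d hd
    change tensorGrade K (polyGrade K n) (barDGrade K n N GN i) d = ⊥
    rw [eq_bot_iff, tensorGrade_le_iff]
    intro p q hpq s hs y hy
    by_cases hp : 0 ≤ p
    · rw [ih q (by omega)] at hy
      rw [(Submodule.mem_bot K).mp hy, TensorProduct.tmul_zero]
      exact Submodule.zero_mem _
    · unfold polyGrade at hs
      rw [if_neg hp] at hs
      rw [(Submodule.mem_bot K).mp hs, TensorProduct.zero_tmul]
      exact Submodule.zero_mem _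

variable (K n) in
/-- The multiplication map `S ⊗ M → M`, linear over `S`. -/
def muS (M : Type) [AddCommGroup M] [Module K M] [Module (PS K n) M]
    [IsScalarTower K (PS K n) M] : PS K n ⊗[K] M →ₗ[PS K n] M :=
  TensorProduct.AlgebraTensorModule.lift
    ((LinearMap.lsmul (PS K n) (M →ₗ[K] M)).flip LinearMap.id)

variable {M : Type} [AddCommGroup M] [Module K M] [Module (PS K n) M]
  [IsScalarTower K (PS K n) M]

theorem muS_tmul (s : PS K n) (m : M) : muS K n M (s ⊗ₜ m) = s • m := by
  simp [muS]

variable (K n M) in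
/-- First syzygy of `M`. -/
abbrev Syz : Submodule (PS K n) (PS K n ⊗[K] M) := LinearMap.ker (muS K n M)

variable (K n M) in
/-- First syzygy of `M`, as a type. -/
def SyzT : Type := ↥(Syz K n M)

instance : AddCommGroup (SyzT K n M) := (Syz K n M).addCommGroup
instance : Module (PS K n) (SyzT K n M) := (Syz K n M).module
instance : Module K (SyzT K n M) := (Syz K n M).module'
instance : IsScalarTower K (PS K n) (SyzT K n M) := (Syz K n M).isScalarTower

variable (K n M) in
/-- The inclusion of the syzygy. -/
def inclS : SyzT K n M →ₗ[K] PS K n ⊗[K] M where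
  toFun x := x.1
  map_add' _ _ := rfl
  map_smul' _ _ := rfl

variable (K n M) in
/-- The projection onto the syzygy. -/
def rhoS : PS K n ⊗[K] M →ₗ[K] SyzT K n M where
  toFun x := ⟨x - (1 : PS K n) ⊗ₜ[K] muS K n M x, by
    rw [LinearMap.mem_ker, map_sub, muS_tmul, one_smul, sub_self]⟩
  map_add' x y := by
    apply Subtype.ext
    change _ = (x - (1 : PS K n) ⊗ₜ[K] muS K n M x) + (y - (1 : PS K n) ⊗ₜ[K] muS K n M y)
    simp only [map_add, TensorProduct.tmul_add]
    abel
  map_smul' c x := by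
    apply Subtype.ext
    have : muS K n M (c • x) = c • muS K n M x :=
      ((muS K n M).restrictScalars K).map_smul c x
    change _ = c • (x - (1 : PS K n) ⊗ₜ[K] muS K n M x)
    simp only [this, TensorProduct.tmul_smul, smul_sub]

/-- The grading of the syzygy. -/
def syzGrade (GM : ℤ → Submodule K M) : ℤ → Submodule K (SyzT K n M) := fun d =>
  (tensorGrade K (polyGrade K n) GM d).comap (inclS K n M)

variable {D : Type} [AddCommGroup D] [Module K D]

variable (K n M) in
/-- The contracting homotopy. -/
def hS (D : Type) [AddCommGroup D] [Module K D] :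
    (PS K n ⊗[K] M) ⊗[K] D →ₗ[K] (PS K n ⊗[K] M) ⊗[K] (PS K n ⊗[K] D) :=
  TensorProduct.map (TensorProduct.mk K (PS K n) M 1) LinearMap.id ∘ₗ
    (TensorProduct.assoc K M (PS K n) D).toLinearMap ∘ₗ
    TensorProduct.map (TensorProduct.comm K (PS K n) M).toLinearMap LinearMap.id

theorem hS_tmul (s : PS K n) (m : M) (x : D) :
    hS K n M D ((s ⊗ₜ m) ⊗ₜ x) = ((1 : PS K n) ⊗ₜ m) ⊗ₜ (s ⊗ₜ x) := by
  simp [hS]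

theorem hS_homotopy (c : PS K n ⊗[K] D →ₗ[K] D) (x : (PS K n ⊗[K] M) ⊗[K] (PS K n ⊗[K] D)) :
    bOp (PS K n ⊗[K] M) (stepC c) (hS K n M _ x) + hS K n M _ (bOp (PS K n ⊗[K] M) c x) = x := by
  have : bOp (PS K n ⊗[K] M) (stepC c) ∘ₗ hS K n M _ +
      hS K n M _ ∘ₗ bOp (PS K n ⊗[K] M) c = LinearMap.id := by
    apply TensorProduct.ext'
    intro u y
    induction u using TensorProduct.induction_on with
    | zero => simp only [TensorProduct.zero_tmul, map_zero]
    | add u v hu hv => rw [TensorProduct.add_tmul, map_add, hu, hv, map_add]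
    | tmul s m =>
    induction y using TensorProduct.induction_on with
    | zero => simp only [TensorProduct.tmul_zero, map_zero]
    | add x y hx hy => rw [TensorProduct.tmul_add, map_add, hx, hy, map_add]
    | tmul s' t =>
    simp only [LinearMap.add_apply, LinearMap.comp_apply, hS_tmul, bOp_tmul, stepC_tmul,
      map_sub, TensorProduct.smul_tmul', smul_eq_mul, mul_one, TensorProduct.tmul_sub,
      LinearMap.id_apply, mul_comm s' s]
    abel
  exact LinearMap.congr_fun this x

theorem one_mem_polyGrade : (1 : PS K n) ∈ polyGrade K n 0 := by
  unfold polyGrade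
  rw [if_pos le_rfl]
  exact isHomogeneous_one _ _

theorem exact_step {M' : Type} [AddCommGroup M'] [Module K M'] [Module (PS K n) M']
    [IsScalarTower K (PS K n) M'] (incl : M' →ₗ[K] PS K n ⊗[K] M)
    (rho : PS K n ⊗[K] M →ₗ[K] M') (hinclinj : Function.Injective incl)
    (hmui : ∀ x, muS K n M (incl x) = 0)
    (hir : ∀ x, incl (rho x) = x - (1 : PS K n) ⊗ₜ[K] muS K n M x)
    (hinclnat : ∀ (s : PS K n) (m : M'), incl (s • m) = s • incl m)
    (GM' : ℤ → Submodule K M')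
    (c : PS K n ⊗[K] D →ₗ[K] D) (hcc : ∀ x, c (stepC c x) = 0)
    (GM : ℤ → Submodule K M) (hGM : GrComp (n := n) GM) (GD : ℤ → Submodule K D)
    (hGM' : ∀ d x, incl x ∈ tensorGrade K (polyGrade K n) GM d → x ∈ GM' d)
    (hc : ∀ d, ∀ x ∈ tensorGrade K (polyGrade K n) GD d, c x ∈ GD d) (j : ℤ)
    (IH : ∀ y : M' ⊗[K] (PS K n ⊗[K] D),
      y ∈ tensorGrade K GM'
        (tensorGrade K (polyGrade K n) GD) j →
      bOp M' c y = 0 → y ∈ LinearMap.range (bOp M' (stepC c)))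
    (z : M ⊗[K] (PS K n ⊗[K] (PS K n ⊗[K] D)))
    (hz : z ∈ tensorGrade K GM
      (tensorGrade K (polyGrade K n) (tensorGrade K (polyGrade K n) GD)) j)
    (hbz : bOp M (stepC c) z = 0) :
    z ∈ LinearMap.range (bOp M (stepC (stepC c))) := by
  have hSM : GrComp (n := n) (tensorGrade K (polyGrade K n) GM) := by
    intro a b s x hs hx
    have : tensorGrade K (polyGrade K n) GM b ≤
        (tensorGrade K (polyGrade K n) GM (a + b)).comap
          ((LinearMap.lsmul (PS K n) (PS K n ⊗[K] M) s).restrictScalars K) := by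
      rw [tensorGrade_le_iff]
      intro p q hpq t ht m hm
      simp only [Submodule.mem_comap, LinearMap.restrictScalars_apply, LinearMap.lsmul_apply,
        TensorProduct.smul_tmul']
      exact tmul_mem_tensorGrade (by omega) (polyGrade_mul hs ht) hm
    exact this hx
  have hmu : ∀ d, ∀ x ∈ tensorGrade K (polyGrade K n) GM d, muS K n M x ∈ GM d := by
    intro d
    change tensorGrade K (polyGrade K n) GM d ≤ (GM d).comap ((muS K n M).restrictScalars K)
    rw [tensorGrade_le_iff]
    intro p q hpq t ht m hm
    simp only [Submodule.mem_comap, LinearMap.restrictScalars_apply, muS_tmul]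
    subst hpq
    exact hGM p q t m ht hm
  have hrho : ∀ d, ∀ x ∈ tensorGrade K (polyGrade K n) GM d, rho x ∈ GM' d := by
    intro d x hx
    apply hGM'
    rw [hir]
    refine Submodule.sub_mem _ hx ?_
    exact tmul_mem_tensorGrade (zero_add d) one_mem_polyGrade (hmu d x hx)
  let mk1 : M →ₗ[K] PS K n ⊗[K] M := TensorProduct.mk K (PS K n) M 1
  let mu : PS K n ⊗[K] M →ₗ[K] M := (muS K n M).restrictScalars K
  have hmumk : mu ∘ₗ mk1 = LinearMap.id := by
    ext m
    simp [mu, mk1, muS_tmul]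
  have hmuincl : mu ∘ₗ incl = 0 := by
    ext x
    exact hmui x
  have hinclrho : incl ∘ₗ rho = LinearMap.id - mk1 ∘ₗ mu := by
    apply LinearMap.ext
    exact hir
  let zt := TensorProduct.map mk1 LinearMap.id z
  have hmuzt : TensorProduct.map mu LinearMap.id zt = z := by
    rw [← LinearMap.comp_apply, ← TensorProduct.map_comp, hmumk, LinearMap.id_comp,
      TensorProduct.map_id, LinearMap.id_apply]
  let u := bOp (PS K n ⊗[K] M) (stepC c) zt
  have hmuu : TensorProduct.map mu LinearMap.id u = 0 := by
    rw [← bOp_natural (stepC c) mu (fun s m => (muS K n M).map_smul s m), hmuzt, hbz]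
  have hzt : zt ∈ tensorGrade K (tensorGrade K (polyGrade K n) GM)
      (tensorGrade K (polyGrade K n) (tensorGrade K (polyGrade K n) GD)) j :=
    map_tensorGrade mk1 LinearMap.id
      (fun d x hx => tmul_mem_tensorGrade (zero_add d) one_mem_polyGrade hx)
      (fun _ _ h => h) j z hz
  have hu := bOp_grade hSM (stepC c) (stepC_grade c hc) j zt hzt
  let y := TensorProduct.map rho LinearMap.id u
  have hy := map_tensorGrade rho LinearMap.id hrho (fun _ _ h => h) j u hu
  have hincly : TensorProduct.map incl LinearMap.id y = u := by
    have : TensorProduct.map (mk1 ∘ₗ mu) (LinearMap.id : PS K n ⊗[K] D →ₗ[K] _) u = 0 := by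
      rw [← LinearMap.id_comp (LinearMap.id : PS K n ⊗[K] D →ₗ[K] _), TensorProduct.map_comp,
        LinearMap.comp_apply, hmuu, map_zero]
    have h2 : TensorProduct.map (incl ∘ₗ rho) (LinearMap.id : PS K n ⊗[K] D →ₗ[K] _) u +
        TensorProduct.map (mk1 ∘ₗ mu) (LinearMap.id : PS K n ⊗[K] D →ₗ[K] _) u = u := by
      rw [← LinearMap.add_apply, ← TensorProduct.map_add_left, hinclrho]
      have h3 : LinearMap.id - mk1 ∘ₗ mu + mk1 ∘ₗ mu = LinearMap.id := by
        ext x; simp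
      rw [h3, TensorProduct.map_id, LinearMap.id_apply]
    rw [this, add_zero] at h2
    rw [← LinearMap.comp_apply, ← TensorProduct.map_comp, LinearMap.id_comp]
    exact h2
  have hinj : Function.Injective
      (TensorProduct.map incl (LinearMap.id : D →ₗ[K] D)) := by
    obtain ⟨g, hg⟩ := incl.exists_leftInverse_of_injective
      (LinearMap.ker_eq_bot.mpr hinclinj)
    have h : TensorProduct.map g (LinearMap.id : D →ₗ[K] D) ∘ₗ
        TensorProduct.map incl (LinearMap.id : D →ₗ[K] D) = LinearMap.id := by
      rw [← TensorProduct.map_comp, hg, LinearMap.id_comp, TensorProduct.map_id]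
    intro x y hxy
    have := congrArg (TensorProduct.map g (LinearMap.id : D →ₗ[K] D)) hxy
    rwa [← LinearMap.comp_apply, ← LinearMap.comp_apply, h] at this
  have hby : bOp M' c y = 0 := by
    apply hinj
    rw [← bOp_natural c _ hinclnat, hincly, map_zero]
    exact bOp_bOp c hcc zt
  obtain ⟨v, hv⟩ := IH y hy hby
  let x := zt - TensorProduct.map incl LinearMap.id v
  have hbx : bOp (PS K n ⊗[K] M) (stepC c) x = 0 := by
    rw [map_sub, bOp_natural (stepC c) _ hinclnat, hv, hincly, sub_self]
  have hx := hS_homotopy (stepC c) x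
  rw [hbx, map_zero, add_zero] at hx
  refine ⟨TensorProduct.map mu LinearMap.id (hS K n M _ x), ?_⟩
  rw [bOp_natural (stepC (stepC c)) mu (fun s m => (muS K n M).map_smul s m), hx, map_sub, hmuzt]
  have : TensorProduct.map mu LinearMap.id (TensorProduct.map incl LinearMap.id v) = 0 := by
    rw [← LinearMap.comp_apply, ← TensorProduct.map_comp, hmuincl, TensorProduct.map_zero_left,
      LinearMap.zero_apply]
  rw [this, sub_zero]

theorem vanish {GN : ℤ → Submodule K N} (hN : GrComp (n := n) GN) (hN0 : ∀ d < 0, GN d = ⊥)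
    (j : ℤ) (k : ℕ) : ∀ (M : Type) [AddCommGroup M] [Module K M] [Module (PS K n) M]
      [IsScalarTower K (PS K n) M] (GM : ℤ → Submodule K M) (_ : GrComp (n := n) GM)
      (_ : ∀ d : ℤ, d + k ≤ j → GM d = ⊥) (i : ℕ) (_ : k ≤ i),
      ∀ z ∈ tensorGrade K GM (barDGrade K n N GN (i + 1)) j, barB K n N M i z = 0 →
        z ∈ LinearMap.range (barB K n N M (i + 1)) := by
  induction k with
  | zero =>
    intro M _ _ _ _ GM hM hlow i _ z hz _
    have : tensorGrade K GM (barDGrade K n N GN (i + 1)) j ≤ ⊥ := by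
      rw [tensorGrade_le_iff]
      intro p q hpq x hx y hy
      by_cases hp : p ≤ j
      · rw [hlow p (by simpa using hp)] at hx
        rw [(Submodule.mem_bot K).mp hx, TensorProduct.zero_tmul]
        exact Submodule.zero_mem _
      · rw [barDGrade_neg hN0 _ q (by omega)] at hy
        rw [(Submodule.mem_bot K).mp hy, TensorProduct.tmul_zero]
        exact Submodule.zero_mem _
    rw [(Submodule.mem_bot K).mp (this hz)]
    exact Submodule.zero_mem _
  | succ k ih =>
    intro M _ _ _ _ GM hM hlow i hi z hz hbz
    obtain ⟨i, rfl⟩ : ∃ i', i = i' + 1 := ⟨i - 1, by omega⟩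
    have hsyz : GrComp (K := K) (n := n) (M := SyzT K n M) (syzGrade (K := K) (n := n) (M := M) GM) := by
      intro a b s x hs hx
      have : tensorGrade K (polyGrade K n) GM b ≤
          (tensorGrade K (polyGrade K n) GM (a + b)).comap
            ((LinearMap.lsmul (PS K n) (PS K n ⊗[K] M) s).restrictScalars K) := by
        rw [tensorGrade_le_iff]
        intro p q hpq t ht m hm
        simp only [Submodule.mem_comap, LinearMap.restrictScalars_apply, LinearMap.lsmul_apply,
          TensorProduct.smul_tmul']
        exact tmul_mem_tensorGrade (by omega) (polyGrade_mul hs ht) hm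
      exact this hx
    have hlow' : ∀ d : ℤ, d + k ≤ j → syzGrade (K := K) (n := n) (M := M) GM d = ⊥ := by
      intro d hd
      have h1 : tensorGrade K (polyGrade K n) GM d ≤
          LinearMap.range (TensorProduct.mk K (PS K n) M 1) := by
        rw [tensorGrade_le_iff]
        intro p q hpq s hs m hm
        rcases lt_trichotomy p 0 with hp | hp | hp
        · unfold polyGrade at hs
          rw [if_neg (by omega)] at hs
          rw [(Submodule.mem_bot K).mp hs, TensorProduct.zero_tmul]
          exact Submodule.zero_mem _
        · subst hp
          unfold polyGrade at hs
          rw [if_pos le_rfl, Int.toNat_zero, mem_homogeneousSubmodule] at hs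
          have hs' := (totalDegree_zero_iff_isHomogeneous _).mpr hs
          rw [totalDegree_eq_zero_iff_eq_C] at hs'
          refine ⟨coeff 0 s • m, ?_⟩
          rw [TensorProduct.mk_apply, TensorProduct.tmul_smul, TensorProduct.smul_tmul']
          conv_rhs => rw [hs']
          rw [Algebra.smul_def, mul_one]
          rfl
        · rw [hlow q (by push_cast; omega)] at hm
          rw [(Submodule.mem_bot K).mp hm, TensorProduct.tmul_zero]
          exact Submodule.zero_mem _
      rw [eq_bot_iff]
      intro x hx
      obtain ⟨m, hm⟩ := h1 hx
      have h2 : muS K n M (inclS K n M x) = 0 := x.2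
      rw [← hm, TensorProduct.mk_apply, muS_tmul, one_smul] at h2
      rw [h2, map_zero] at hm
      exact (Submodule.mem_bot K).mpr (Subtype.ext hm.symm)
    have key := ih (SyzT K n M) (syzGrade (K := K) (n := n) (M := M) GM) hsyz hlow' i (by omega)
    have hmui : ∀ x, muS K n M (inclS K n M x) = 0 := fun x => x.2
    exact exact_step (M' := SyzT K n M) (inclS K n M) (rhoS K n M) Subtype.val_injective
      hmui (fun x => rfl) (fun s m => rfl) (syzGrade (K := K) (n := n) (M := M) GM)
      (barC K n N i) (barC_barC i) GM hM (barDGrade K n N GN i) (fun d x h => h)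
      (barC_grade hN i) j key z hz hbz

end Vanish

end PartN4

section PartN5

section Strand

variable {K} {n}

theorem HB.iSupIndep {A : Type} [AddCommGroup A] [Module K A]
    {GA : ℤ → Submodule K A} {a : ℤ} (h : HB GA a) : iSupIndep GA := by
  obtain ⟨ι, deg, b, -, -, hs⟩ := h
  intro i
  have h1 : (⨆ (j) (_ : j ≠ i), GA j) ≤ Submodule.span K (b '' {k | deg k ≠ i}) := by
    refine iSup₂_le fun j hj => ?_
    rw [hs]
    refine Submodule.span_mono (Set.image_mono ?_)
    intro k hk
    have hk' : deg k = j := hk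
    change deg k ≠ i
    rw [hk']; exact hj
  refine Disjoint.mono_right h1 ?_
  rw [hs]
  refine b.linearIndependent.disjoint_span_image ?_
  rw [Set.disjoint_left]
  intro k h1 h2
  exact h2 h1

theorem HB.sub {A B : Type} [AddCommGroup A] [Module K A] [AddCommGroup B] [Module K B]
    {GA : ℤ → Submodule K A} {a : ℤ} (h : HB GA a) (f : B →ₗ[K] A) (hf : Function.Injective f)
    (hlow : ∀ d < a, GA d = ⊥)
    (htop : ∀ x : B, x ∈ ⨆ d, (GA d).comap f) : HB (fun d => (GA d).comap f) a := by
  refine HB.of_internal ?_ ?_ ?_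
  · apply DirectSum.isInternal_submodule_of_iSupIndep_of_iSup_eq_top
    · exact iSupIndep_comap_of_injective h.iSupIndep f hf
    · rw [eq_top_iff]; intro x _; exact htop x
  · intro d
    have := h.finite d
    let g : (GA d).comap f →ₗ[K] GA d := f.restrict (fun x hx => hx)
    exact FiniteDimensional.of_injective g (fun x y hxy => by
      apply Subtype.ext
      apply hf
      exact congrArg Subtype.val hxy)
  · intro d hd
    rw [eq_bot_iff]
    intro x hx
    rw [Submodule.mem_comap, hlow d hd, Submodule.mem_bot] at hx
    rw [Submodule.mem_bot]
    apply hf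
    rw [hx, map_zero]

theorem HB_polyGrade : HB (polyGrade K n) 0 := by
  refine ⟨Fin n →₀ ℕ, fun m => (m.degree : ℤ), MvPolynomial.basisMonomials (Fin n) K, ?_, ?_, ?_⟩
  · intro m; positivity
  · intro d
    refine Set.Finite.subset (Finsupp.finite_of_degree_le (σ := Fin n) d.toNat) ?_
    intro m hm
    have hm' : (m.degree : ℤ) = d := hm
    change m.degree ≤ d.toNat
    omega
  · intro d
    unfold polyGrade
    split_ifs with hd
    · rw [homogeneousSubmodule_eq_finsupp_supported]
      have : {i : Fin n →₀ ℕ | i.degree = d.toNat} = {i | (i.degree : ℤ) = d} := by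
        ext m
        change m.degree = d.toNat ↔ (m.degree : ℤ) = d
        omega
      rw [this, AddMonoidAlgebra.supported_eq_span_single]
      congr 1
    · have : {i : Fin n →₀ ℕ | (i.degree : ℤ) = d} = ∅ := by
        ext m
        change (m.degree : ℤ) = d ↔ False
        have : 0 ≤ (m.degree : ℤ) := by positivity
        constructor
        · intro h; omega
        · exact False.elim
      rw [this]; simp

theorem polyGrade_neg (d : ℤ) (hd : d < 0) : polyGrade K n d = ⊥ := by
  unfold polyGrade; rw [if_neg (by omega)]

theorem homogeneousComponent_mem_polyGrade (d : ℕ) (f : PS K n) :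
    homogeneousComponent d f ∈ polyGrade K n d := by
  unfold polyGrade
  rw [if_pos (by positivity), Int.toNat_natCast]
  exact homogeneousComponent_isHomogeneous d f

variable (K n) in
/-- The inclusion of an ideal, as a `K`-linear map. -/
def idInc (I : Ideal (PS K n)) : I →ₗ[K] PS K n := (Submodule.subtype I).restrictScalars K

theorem HB_ideal (I : Ideal (PS K n)) (hI : IsHomog K n I) : HB (idealGrade K n I) 0 := by
  refine HB.sub (HB_polyGrade) (idInc K n I) Subtype.val_injective polyGrade_neg ?_
  intro x
  have : x = ∑ d ∈ Finset.range ((x : PS K n).totalDegree + 1),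
      (⟨homogeneousComponent d (x : PS K n), hI _ x.2 d⟩ : I) := by
    apply Subtype.ext
    rw [Submodule.coe_sum]
    exact (sum_homogeneousComponent (x : PS K n)).symm
  rw [this]
  refine Submodule.sum_mem _ fun d _ => ?_
  exact Submodule.mem_iSup_of_mem (d : ℤ) (homogeneousComponent_mem_polyGrade d _)

theorem GrComp_ideal (I : Ideal (PS K n)) : GrComp (n := n) (idealGrade K n I) := by
  intro a b s x hs hx
  exact polyGrade_mul (K := K) (n := n) hs hx

theorem idealGrade_neg (I : Ideal (PS K n)) (d : ℤ) (hd : d < 0) : idealGrade K n I d = ⊥ := by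
  rw [eq_bot_iff]
  intro x hx
  have hx' : (x : PS K n) ∈ polyGrade K n d := hx
  rw [polyGrade_neg d hd, Submodule.mem_bot] at hx'
  exact (Submodule.mem_bot K).mpr (Subtype.ext hx')

theorem HB_barD {N : Type} [AddCommGroup N] [Module K N] {GN : ℤ → Submodule K N}
    (hN : HB GN 0) (i : ℕ) : HB (barDGrade K n N GN i) 0 := by
  induction i with
  | zero => exact hN
  | succ i ih => exact HB.tensor (a := 0) (a' := 0) HB_polyGrade ih

variable {N : Type} [AddCommGroup N] [Module K N] [Module (PS K n) N]
  [IsScalarTower K (PS K n) N]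
variable {M : Type} [AddCommGroup M] [Module K M] [Module (PS K n) M]
  [IsScalarTower K (PS K n) M]

theorem finrank_ker_inf {A B : Type} [AddCommGroup A] [Module K A] [AddCommGroup B] [Module K B]
    (f : A →ₗ[K] B) (P : Submodule K A) [FiniteDimensional K P] :
    Module.finrank K (P.map f) + Module.finrank K ↥(LinearMap.ker f ⊓ P) =
      Module.finrank K P := by
  have h := LinearMap.finrank_range_add_finrank_ker (f.domRestrict P)
  rw [LinearMap.range_domRestrict] at h
  rw [← h, inf_comm, ← Submodule.map_comap_subtype, Submodule.finrank_map_subtype_eq]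
  rfl

/-- Strand ranks. -/
def strandRank (GM : ℤ → Submodule K M) (GN : ℤ → Submodule K N) (i : ℕ) (j : ℤ) : ℕ :=
  Module.finrank K ((tensorGrade K GM (barDGrade K n N GN (i + 1)) j).map (barB K n N M i))

theorem tor_zero {GM : ℤ → Submodule K M} {GN : ℤ → Submodule K N} {a : ℤ} (hM : HB GM a)
    (hN : HB GN 0) (hMc : GrComp (n := n) GM) (hNc : GrComp (n := n) GN) (j : ℤ) :
    torStrandDim K n N M GM GN 0 j =
      Module.finrank K (tensorGrade K GM (barDGrade K n N GN 0) j) -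
        strandRank (n := n) GM GN 0 j := by
  change Module.finrank K _ - Module.finrank K ↥(LinearMap.range (barB K n N M 0) ⊓
    tensorGrade K GM (barDGrade K n N GN 0) j) = _
  unfold strandRank
  rw [HB.lift (hM.tensor (HB_barD hN 1)) (hM.tensor (HB_barD hN 0)) (barB K n N M 0)
    (barB_grade hMc hNc 0) j]

theorem tor_succ {GM : ℤ → Submodule K M} {GN : ℤ → Submodule K N} {a : ℤ} (hM : HB GM a)
    (hN : HB GN 0) (hMc : GrComp (n := n) GM) (hNc : GrComp (n := n) GN) (i : ℕ) (j : ℤ) :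
    torStrandDim K n N M GM GN (i + 1) j =
      Module.finrank K (tensorGrade K GM (barDGrade K n N GN (i + 1)) j) -
        strandRank (n := n) GM GN i j - strandRank (n := n) GM GN (i + 1) j := by
  have := (hM.tensor (HB_barD (n := n) hN (i + 1))).finite j
  change Module.finrank K ↥(LinearMap.ker (barB K n N M i) ⊓
    tensorGrade K GM (barDGrade K n N GN (i + 1)) j) -
    Module.finrank K ↥(LinearMap.range (barB K n N M (i + 1)) ⊓
    tensorGrade K GM (barDGrade K n N GN (i + 1)) j) = _
  unfold strandRank
  rw [HB.lift (hM.tensor (HB_barD hN (i + 2))) (hM.tensor (HB_barD hN (i + 1)))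
    (barB K n N M (i + 1)) (barB_grade hMc hNc (i + 1)) j]
  congr 1
  have := finrank_ker_inf (barB K n N M i) (tensorGrade K GM (barDGrade K n N GN (i + 1)) j)
  omega

theorem tor_vanish {GM : ℤ → Submodule K M} {GN : ℤ → Submodule K N} {a : ℤ} (hM : HB GM a)
    (hlow : ∀ d < a, GM d = ⊥)
    (hN : HB GN 0) (hN0 : ∀ d < 0, GN d = ⊥)
    (hMc : GrComp (n := n) GM) (hNc : GrComp (n := n) GN) (j : ℤ) (i : ℕ)
    (hi : j - a < i) :
    torStrandDim K n N M GM GN (i + 1) j = 0 := by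
  have := (hM.tensor (HB_barD (n := n) hN (i + 1))).finite j
  change Module.finrank K ↥(LinearMap.ker (barB K n N M i) ⊓
    tensorGrade K GM (barDGrade K n N GN (i + 1)) j) -
    Module.finrank K ↥(LinearMap.range (barB K n N M (i + 1)) ⊓
    tensorGrade K GM (barDGrade K n N GN (i + 1)) j) = _
  rw [Nat.sub_eq_zero_iff_le]
  have : FiniteDimensional K ↥(LinearMap.range (barB K n N M (i + 1)) ⊓
      tensorGrade K GM (barDGrade K n N GN (i + 1)) j) :=
    Submodule.finiteDimensional_inf_right _ _
  apply Submodule.finrank_mono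
  rintro z ⟨hz1, hz2⟩
  refine ⟨?_, hz2⟩
  refine vanish hNc hN0 j i M GM hMc ?_ i le_rfl z hz2 hz1
  intro d hd
  exact hlow d (by omega)

theorem rank_semi {GM : ℤ → Submodule K M} {a : ℤ} (hM : HB GM a)
    (I0 : Ideal (PS K n)) (hI0 : IsHomog K n I0)
    (Θ : K → (PS K n →ₗ[K] PS K n)) (hΘ : ∀ x, (fun l => Θ l x) ∈ PolyFam (K := K) (PS K n))
    (h0 : ∀ g ∈ I0, Θ 0 g = g) (i : ℕ) (j : ℤ) :
    ∃ F : Polynomial K, F ≠ 0 ∧ ∀ l, F.eval l ≠ 0 → ∀ (I : Ideal (PS K n)) (_ : IsHomog K n I)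
      (θ : I0 →ₗ[K] I) (_ : ∀ g, (θ g : PS K n) = Θ l g)
      (_ : ∀ d, ∀ x ∈ idealGrade K n I0 d, θ x ∈ idealGrade K n I d),
      strandRank (n := n) GM (idealGrade K n I0) i j ≤
        strandRank (n := n) GM (idealGrade K n I) i j := by
  let T : K → (M ⊗[K] barD K n I0 (i + 1) →ₗ[K] M ⊗[K] barD K n (PS K n) i) := fun l =>
    barB K n (PS K n) M i ∘ₗ bm M (Θ l ∘ₗ idInc K n I0) (i + 1)
  have hT : ∀ x, (fun l => T l x) ∈ PolyFam (K := K) _ := by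
    intro x
    exact PolyFam.map (barB K n (PS K n) M i)
      (polyFam_bm (n := n) (M := M) (fun l => Θ l ∘ₗ idInc K n I0) (fun y => hΘ _) (i + 1) x)
  have key : ∀ (I : Ideal (PS K n)) (P : Submodule K (M ⊗[K] barD K n I (i + 1))),
      P.map (barB K n (PS K n) M i ∘ₗ bm M (idInc K n I) (i + 1)) =
      (P.map (barB K n I M i)).map (bm M (idInc K n I) i) := by
    intro I P
    rw [← Submodule.map_comp]
    congr 1
    apply LinearMap.ext
    intro x
    exact (bm_barB (M := M) (idInc K n I) (fun s m => rfl) i x).symm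
  have key2 : ∀ (I : Ideal (PS K n)) (P : Submodule K (M ⊗[K] barD K n I (i + 1))),
      Module.finrank K (P.map (barB K n (PS K n) M i ∘ₗ bm M (idInc K n I) (i + 1))) =
      Module.finrank K (P.map (barB K n I M i)) := by
    intro I P
    rw [key]
    exact (LinearEquiv.finrank_eq (Submodule.equivMapOfInjective (bm M (idInc K n I) i)
      (bm_injective _ Subtype.val_injective i) _)).symm
  have := (hM.tensor (HB_barD (n := n) (HB_ideal I0 hI0) (i + 1))).finite j
  obtain ⟨F, hF, hFl⟩ := semicont T hT
    (tensorGrade K GM (barDGrade K n I0 (idealGrade K n I0) (i + 1)) j)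
  refine ⟨F, hF, ?_⟩
  intro l hl I hI θ hθ hθg
  have h1 := hFl l hl
  have hT0 : T 0 = barB K n (PS K n) M i ∘ₗ bm M (idInc K n I0) (i + 1) := by
    have : Θ 0 ∘ₗ idInc K n I0 = idInc K n I0 := by
      apply LinearMap.ext
      intro x
      exact h0 _ x.2
    simp only [T, this]
  rw [hT0, key2] at h1
  unfold strandRank
  refine h1.trans ?_
  rw [← key2 I]
  have hfin := (hM.tensor (HB_barD (n := n) (HB_ideal I hI) (i + 1))).finite j
  apply Submodule.finrank_mono
  have hTl : T l = (barB K n (PS K n) M i ∘ₗ bm M (idInc K n I) (i + 1)) ∘ₗ bm M θ (i + 1) := by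
    have : Θ l ∘ₗ idInc K n I0 = idInc K n I ∘ₗ θ := by
      apply LinearMap.ext
      intro x
      exact (hθ x).symm
    change barB K n (PS K n) M i ∘ₗ bm M (Θ l ∘ₗ idInc K n I0) (i + 1) = _
    rw [this, bm_comp]
    rfl
  rw [hTl, Submodule.map_comp]
  apply Submodule.map_mono
  rintro _ ⟨x, hx, rfl⟩
  exact bm_grade GM θ hθg (i + 1) j x hx

theorem strand_dim_le {N' : Type} [AddCommGroup N'] [Module K N'] {GM : ℤ → Submodule K M}
    {a : ℤ} (hM : HB GM a) {GN : ℤ → Submodule K N} (hN : HB GN 0) {GN' : ℤ → Submodule K N'}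
    (f : N' →ₗ[K] N) (hf : Function.Injective f) (hfg : ∀ d, ∀ x ∈ GN' d, f x ∈ GN d)
    (i : ℕ) (j : ℤ) :
    Module.finrank K (tensorGrade K GM (barDGrade K n N' GN' i) j) ≤
      Module.finrank K (tensorGrade K GM (barDGrade K n N GN i) j) := by
  have := (hM.tensor (HB_barD (n := n) hN i)).finite j
  let g : tensorGrade K GM (barDGrade K n N' GN' i) j →ₗ[K]
    tensorGrade K GM (barDGrade K n N GN i) j :=
    (bm M f i).restrict (bm_grade GM f hfg i j)
  refine LinearMap.finrank_le_finrank_of_injective (f := g) ?_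
  intro x y hxy
  apply Subtype.ext
  exact bm_injective (n := n) (M := M) f hf i (congrArg Subtype.val hxy)

end Strand

end PartN5

section PartN6

section Theta

variable {K} {n}

/-- Diagonal scaling of the monomial basis. -/
def scale (c : (Fin n →₀ ℕ) → K) : PS K n →ₗ[K] PS K n :=
  (basisMonomials (Fin n) K).constr K (fun m => monomial m (c m))

theorem scale_monomial (c : (Fin n →₀ ℕ) → K) (m : Fin n →₀ ℕ) :
    scale c (monomial m 1) = monomial m (c m) := by
  have := (basisMonomials (Fin n) K).constr_basis K (fun m => monomial m (c m)) m
  rw [coe_basisMonomials] at this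
  exact this

theorem coeff_scale (c : (Fin n →₀ ℕ) → K) (f : PS K n) (m : Fin n →₀ ℕ) :
    coeff m (scale c f) = c m * coeff m f := by
  have : (lcoeff K m) ∘ₗ scale c = c m • lcoeff K m := by
    apply (basisMonomials (Fin n) K).ext
    intro u
    rw [coe_basisMonomials, LinearMap.comp_apply, scale_monomial, LinearMap.smul_apply,
      lcoeff_apply, lcoeff_apply, coeff_monomial, coeff_monomial, smul_eq_mul]
    split_ifs with h
    · rw [h, mul_one]
    · rw [mul_zero]
  exact LinearMap.congr_fun this f

variable (w : Fin n → ℕ)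

/-- Bidegree. -/
def qd (m : Fin n →₀ ℕ) : ℕ × ℕ := (m.degree, wdeg n w m)

variable (K) in
/-- Projection to a bidegree. -/
def piq (q : ℕ × ℕ) : PS K n →ₗ[K] PS K n := scale (fun m => if qd w m = q then 1 else 0)

theorem coeff_piq (q : ℕ × ℕ) (f : PS K n) (m : Fin n →₀ ℕ) :
    coeff m (piq K w q f) = if qd w m = q then coeff m f else 0 := by
  rw [piq, coeff_scale, ite_mul, one_mul, zero_mul]

theorem sum_piq (f : PS K n) : f = ∑ q ∈ f.support.image (qd w), piq K w q f := by
  ext m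
  rw [coeff_sum]
  simp only [coeff_piq]
  rw [Finset.sum_ite_eq]
  split_ifs with h
  · rfl
  · by_contra h0
    exact h (Finset.mem_image_of_mem _ (mem_support_iff.mpr h0))

/-- The filtered piece of `J`. -/
def FJ (J : Ideal (PS K n)) (q : ℕ × ℕ) : Submodule K (PS K n) where
  carrier := {f | f ∈ J ∧ ∀ m, coeff m f ≠ 0 → m.degree = q.1 ∧ wdeg n w m ≤ q.2}
  zero_mem' := ⟨J.zero_mem, fun m h => absurd (coeff_zero m) h⟩
  add_mem' := by
    rintro f g ⟨hf, hf'⟩ ⟨hg, hg'⟩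
    refine ⟨J.add_mem hf hg, fun m h => ?_⟩
    by_cases h1 : coeff m f = 0
    · apply hg'
      rw [coeff_add, h1, zero_add] at h
      exact h
    · exact hf' m h1
  smul_mem' := by
    rintro c f ⟨hf, hf'⟩
    refine ⟨Submodule.smul_of_tower_mem J c hf, fun m h => hf' m fun h0 => h ?_⟩
    rw [coeff_smul, h0, smul_zero]

theorem mem_FJ {J : Ideal (PS K n)} {q : ℕ × ℕ} {f : PS K n} : f ∈ FJ w J q ↔
    f ∈ J ∧ ∀ m, coeff m f ≠ 0 → m.degree = q.1 ∧ wdeg n w m ≤ q.2 := Iff.rfl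

theorem exists_sec {A B : Type} [AddCommGroup A] [Module K A] [AddCommGroup B] [Module K B]
    (p : A →ₗ[K] B) (F : Submodule K A) :
    ∃ s : B →ₗ[K] A, (∀ g, s g ∈ F) ∧ ∀ f ∈ F, p (s (p f)) = p f := by
  obtain ⟨r, hr⟩ := (p ∘ₗ F.subtype).rangeRestrict.exists_rightInverse_of_surjective
    (LinearMap.range_rangeRestrict _)
  obtain ⟨s, hs⟩ := LinearMap.exists_extend r
  refine ⟨F.subtype ∘ₗ s, fun g => (s g).2, fun f hf => ?_⟩
  have hf2 : p f ∈ LinearMap.range (p ∘ₗ F.subtype) := ⟨⟨f, hf⟩, rfl⟩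
  have h1 : s (p f) = r ⟨p f, hf2⟩ := LinearMap.congr_fun hs ⟨p f, hf2⟩
  rw [LinearMap.comp_apply, h1]
  exact congrArg Subtype.val (LinearMap.congr_fun hr ⟨p f, hf2⟩)

/-- Sections. -/
def sg (J : Ideal (PS K n)) (q : ℕ × ℕ) : PS K n →ₗ[K] PS K n :=
  (exists_sec (piq K w q) (FJ w J q)).choose

theorem sg_mem (J : Ideal (PS K n)) (q : ℕ × ℕ) (g : PS K n) : sg w J q g ∈ FJ w J q :=
  (exists_sec (piq K w q) (FJ w J q)).choose_spec.1 g

theorem piq_sg (J : Ideal (PS K n)) (q : ℕ × ℕ) (f : PS K n) (hf : f ∈ FJ w J q) :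
    piq K w q (sg w J q (piq K w q f)) = piq K w q f :=
  (exists_sec (piq K w q) (FJ w J q)).choose_spec.2 f hf

/-- Homogenization. -/
def Eh (e : ℕ) (l : K) : PS K n →ₗ[K] PS K n := scale (fun m => l ^ (e - wdeg n w m))

/-- The deformation. -/
def Th (J : Ideal (PS K n)) (l : K) : PS K n →ₗ[K] PS K n :=
  (basisMonomials (Fin n) K).constr K
    (fun m => Eh w (wdeg n w m) l (sg w J (qd w m) (monomial m 1)))

theorem Th_monomial (J : Ideal (PS K n)) (l : K) (m : Fin n →₀ ℕ) :
    Th w J l (monomial m 1) = Eh w (wdeg n w m) l (sg w J (qd w m) (monomial m 1)) := by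
  have := (basisMonomials (Fin n) K).constr_basis K
    (fun m => Eh w (wdeg n w m) l (sg w J (qd w m) (monomial m 1))) m
  rw [coe_basisMonomials] at this
  exact this

theorem Th_piq (J : Ideal (PS K n)) (l : K) (q : ℕ × ℕ) (f : PS K n) :
    Th w J l (piq K w q f) = Eh w q.2 l (sg w J q (piq K w q f)) := by
  have : Th w J l ∘ₗ piq K w q = Eh w q.2 l ∘ₗ sg w J q ∘ₗ piq K w q := by
    apply (basisMonomials (Fin n) K).ext
    intro u
    rw [coe_basisMonomials]
    simp only [LinearMap.comp_apply]
    rw [piq, scale_monomial]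
    split_ifs with h
    · rw [Th_monomial, h, ← h]; rfl
    · simp only [map_zero]
  exact LinearMap.congr_fun this f

theorem PolyFam_Th (J : Ideal (PS K n)) (x : PS K n) :
    (fun l => Th w J l x) ∈ PolyFam (K := K) (PS K n) := by
  have h0 : (fun l => Th w J l x) =
      fun l => ∑ m ∈ x.support, Th w J l (monomial m (coeff m x)) := by
    ext1 l
    conv_lhs => rw [as_sum x]
    rw [map_sum]
  rw [h0]
  have : (fun l => ∑ m ∈ x.support, Th w J l (monomial m (coeff m x))) =
      ∑ m ∈ x.support, fun l => Th w J l (monomial m (coeff m x)) := by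
    ext1 l; rw [Finset.sum_apply]
  rw [this]
  refine Submodule.sum_mem _ fun m _ => ?_
  have h1 : monomial m (coeff m x) = coeff m x • (monomial m 1 : PS K n) := by
    rw [smul_monomial, smul_eq_mul, mul_one]
  have h2 : (fun l => Th w J l (monomial m (coeff m x))) =
      coeff m x • fun l => Th w J l (monomial m 1) := by
    ext1 l; rw [h1, map_smul]; rfl
  rw [h2]
  refine Submodule.smul_mem _ _ ?_
  simp only [Th_monomial]
  set h := sg w J (qd w m) (monomial m 1)
  have h3 : (fun l => Eh w (wdeg n w m) l h) = ∑ u ∈ h.support, fun l =>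
      l ^ (wdeg n w m - wdeg n w u) • (monomial u (coeff u h) : PS K n) := by
    ext l v
    rw [Finset.sum_apply, coeff_sum, Eh, coeff_scale]
    simp only [coeff_smul, coeff_monomial, smul_eq_mul, mul_ite, mul_zero]
    rw [Finset.sum_ite_eq']
    split_ifs with hv
    · rfl
    · rw [notMem_support_iff.mp hv, mul_zero]
  rw [h3]
  refine Submodule.sum_mem _ fun u _ => Submodule.subset_span ⟨_, _, rfl⟩

/-! initial ideal -/

theorem coeff_initialForm (f : PS K n) (m : Fin n →₀ ℕ) : coeff m (initialForm K n w f) =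
    if wdeg n w m = f.support.sup (wdeg n w) then coeff m f else 0 := by
  rw [initialForm, coeff_sum]
  simp only [coeff_monomial]
  rw [Finset.sum_ite_eq']
  split_ifs with h1 h2 h2
  · rfl
  · exact absurd (Finset.mem_filter.mp h1).2 h2
  · by_contra h0
    exact h1 (Finset.mem_filter.mpr ⟨mem_support_iff.mpr fun h => h0 h.symm, h2⟩)
  · rfl

theorem piq_mem_initial (J : Ideal (PS K n)) (q : ℕ × ℕ) (f : PS K n) (hf : f ∈ FJ w J q) :
    piq K w q f ∈ initialIdealW K n w J := by
  by_cases h0 : piq K w q f = 0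
  · rw [h0]; exact Ideal.zero_mem _
  · obtain ⟨m, hm⟩ := ne_zero_iff.mp h0
    rw [coeff_piq] at hm
    have hq : qd w m = q := by by_contra h; rw [if_neg h] at hm; exact hm rfl
    rw [if_pos hq] at hm
    have hs : f.support.sup (wdeg n w) = q.2 := by
      apply le_antisymm
      · exact Finset.sup_le fun u hu => (hf.2 u (mem_support_iff.mp hu)).2
      · rw [← hq]; exact Finset.le_sup (f := wdeg n w) (mem_support_iff.mpr hm)
    apply Ideal.subset_span
    refine ⟨f, hf.1, ?_⟩
    ext u
    rw [coeff_piq, coeff_initialForm, hs]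
    by_cases hu : coeff u f = 0
    · rw [hu, ite_self, ite_self]
    · have := (hf.2 u hu).1
      have h3 : qd w u = q ↔ wdeg n w u = q.2 := by
        constructor
        · rintro rfl; rfl
        · intro h; exact Prod.ext this h
      simp only [h3]

theorem wdeg_add (a b : Fin n →₀ ℕ) : wdeg n w (a + b) = wdeg n w a + wdeg n w b := by
  simp only [wdeg, Finsupp.add_apply, mul_add, Finset.sum_add_distrib]

theorem wdeg_single (i : Fin n) : wdeg n w (Finsupp.single i 1) = w i := by
  rw [wdeg, Finset.sum_eq_single i]
  · simp
  · intro b _ hb; rw [Finsupp.single_eq_of_ne hb, mul_zero]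
  · simp

theorem initial_piq (J : Ideal (PS K n)) (hJ : IsHomog K n J) (g : PS K n)
    (hg : g ∈ initialIdealW K n w J) :
    ∀ q, ∃ f ∈ FJ w J q, piq K w q f = piq K w q g := by
  induction hg using Submodule.span_induction with
  | mem g hg =>
    obtain ⟨f, hf, rfl⟩ := hg
    intro q
    by_cases hq : q.2 = f.support.sup (wdeg n w)
    · refine ⟨homogeneousComponent q.1 f, ⟨hJ f hf q.1, ?_⟩, ?_⟩
      · intro m hm
        rw [coeff_homogeneousComponent] at hm
        have h1 : m.degree = q.1 := by by_contra h; rw [if_neg h] at hm; exact hm rfl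
        rw [if_pos h1] at hm
        refine ⟨h1, ?_⟩
        rw [hq]
        exact Finset.le_sup (f := wdeg n w) (mem_support_iff.mpr hm)
      · ext m
        rw [coeff_piq, coeff_piq, coeff_homogeneousComponent, coeff_initialForm, ← hq]
        split_ifs with h1 h2 h3 h3
        · rfl
        · exact absurd (congrArg Prod.snd h1) h3
        · exact absurd (congrArg Prod.fst h1) h2
        · rfl
        · rfl
    · refine ⟨0, Submodule.zero_mem _, ?_⟩
      ext m
      rw [map_zero, coeff_zero, coeff_piq, coeff_initialForm]
      split_ifs with h1 h2
      · exact absurd ((congrArg Prod.snd h1).symm.trans h2) hq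
      · rfl
      · rfl
  | zero => exact fun q => ⟨0, Submodule.zero_mem _, rfl⟩
  | add x y _ _ hx hy =>
    intro q
    obtain ⟨f, hf, h1⟩ := hx q
    obtain ⟨f', hf', h2⟩ := hy q
    exact ⟨f + f', Submodule.add_mem _ hf hf', by rw [map_add, map_add, h1, h2]⟩
  | smul p x _ hx =>
    induction p using MvPolynomial.induction_on generalizing x with
    | C c =>
      intro q
      obtain ⟨f, hf, h1⟩ := hx q
      refine ⟨c • f, Submodule.smul_mem _ _ hf, ?_⟩
      rw [smul_eq_mul, C_mul', map_smul, map_smul, h1]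
    | add p p' hp hp' =>
      intro q
      obtain ⟨f, hf, h1⟩ := hp x ‹_› hx q
      obtain ⟨f', hf', h2⟩ := hp' x ‹_› hx q
      refine ⟨f + f', Submodule.add_mem _ hf hf', ?_⟩
      rw [map_add, h1, h2, add_smul, map_add]
    | mul_X p i hp =>
      rw [mul_smul]
      refine hp _ (Submodule.smul_mem _ _ ‹_›) ?_
      intro q
      by_cases hq : 1 ≤ q.1 ∧ w i ≤ q.2
      · obtain ⟨f, hf, h1⟩ := hx (q.1 - 1, q.2 - w i)
        have key : ∀ m : Fin n →₀ ℕ, i ∈ m.support → m = (m - Finsupp.single i 1) + Finsupp.single i 1 := by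
          intro m hm
          rw [tsub_add_cancel_of_le]
          rw [Finsupp.single_le_iff]
          exact Nat.one_le_iff_ne_zero.mpr (Finsupp.mem_support_iff.mp hm)
        refine ⟨X i * f, ⟨J.mul_mem_left _ hf.1, ?_⟩, ?_⟩
        · intro m hm
          rw [coeff_X_mul'] at hm
          have h2 : i ∈ m.support := by by_contra h; rw [if_neg h] at hm; exact hm rfl
          rw [if_pos h2] at hm
          have := hf.2 _ hm
          rw [key m h2, wdeg_add, wdeg_single, map_add, Finsupp.degree_single]
          simp only at this
          omega
        · ext m
          rw [smul_eq_mul, coeff_piq, coeff_piq, coeff_X_mul', coeff_X_mul']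
          split_ifs with h2 h3
          · have h4 := congrArg (coeff (m - Finsupp.single i 1)) h1
            have h5 : qd w (m - Finsupp.single i 1) = (q.1 - 1, q.2 - w i) := by
              rw [key m h3, qd, wdeg_add, wdeg_single, map_add, Finsupp.degree_single] at h2
              rw [← h2, qd]
              simp
            rw [coeff_piq, coeff_piq, if_pos h5, if_pos h5] at h4
            exact h4
          · rfl
          · rfl
      · refine ⟨0, Submodule.zero_mem _, ?_⟩
        ext m
        rw [map_zero, coeff_zero, smul_eq_mul, coeff_piq, coeff_X_mul']
        split_ifs with h2 h3
        · exfalso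
          apply hq
          have h4 : m = (m - Finsupp.single i 1) + Finsupp.single i 1 := by
            rw [tsub_add_cancel_of_le]
            rw [Finsupp.single_le_iff]
            exact Nat.one_le_iff_ne_zero.mpr (Finsupp.mem_support_iff.mp h3)
          rw [h4, qd, wdeg_add, wdeg_single, map_add, Finsupp.degree_single] at h2
          rw [← h2]
          simp
        · rfl
        · rfl

theorem initial_piq_mem (J : Ideal (PS K n)) (hJ : IsHomog K n J) (g : PS K n)
    (hg : g ∈ initialIdealW K n w J) (q : ℕ × ℕ) : piq K w q g ∈ initialIdealW K n w J := by
  obtain ⟨f, hf, h⟩ := initial_piq w J hJ g hg q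
  rw [← h]
  exact piq_mem_initial w J q f hf

theorem initial_homog (J : Ideal (PS K n)) (hJ : IsHomog K n J) :
    IsHomog K n (initialIdealW K n w J) := by
  intro g hg d
  rw [sum_piq w g, map_sum]
  refine Ideal.sum_mem _ fun q _ => ?_
  have : homogeneousComponent d (piq K w q g) = if q.1 = d then piq K w q g else 0 := by
    ext m
    rw [coeff_homogeneousComponent]
    split_ifs with h1 h2 h2
    · rfl
    · rw [coeff_piq, if_neg, coeff_zero]
      rintro rfl; exact h2 h1
    · rw [coeff_piq, if_neg]
      rintro rfl; exact h1 h2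
    · rw [coeff_zero]
  rw [this]
  split_ifs
  · exact initial_piq_mem w J hJ g hg q
  · exact Ideal.zero_mem _

theorem sg_piq_spec (J : Ideal (PS K n)) (hJ : IsHomog K n J) (g : PS K n)
    (hg : g ∈ initialIdealW K n w J) (q : ℕ × ℕ) :
    piq K w q (sg w J q (piq K w q g)) = piq K w q g := by
  obtain ⟨f, hf, h⟩ := initial_piq w J hJ g hg q
  rw [← h]
  exact piq_sg w J q f hf

theorem coeff_Th_piq_eq (J : Ideal (PS K n)) (hJ : IsHomog K n J) (l : K) (g : PS K n)
    (hg : g ∈ initialIdealW K n w J) (m : Fin n →₀ ℕ) :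
    coeff m (Th w J l (piq K w (qd w m) g)) = coeff m g := by
  rw [Th_piq, Eh, coeff_scale]
  have := congrArg (coeff m) (sg_piq_spec w J hJ g hg (qd w m))
  rw [coeff_piq, coeff_piq, if_pos rfl, if_pos rfl] at this
  rw [this]
  simp [qd]

theorem coeff_Th_piq_ne (J : Ideal (PS K n)) (l : K) (g : PS K n)
    (m : Fin n →₀ ℕ) (q : ℕ × ℕ) (h : coeff m (Th w J l (piq K w q g)) ≠ 0) :
    m.degree = q.1 ∧ wdeg n w m ≤ q.2 := by
  rw [Th_piq, Eh, coeff_scale] at h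
  exact (sg_mem w J q _).2 m (right_ne_zero_of_mul h)

theorem Th_zero (J : Ideal (PS K n)) (hJ : IsHomog K n J) (g : PS K n)
    (hg : g ∈ initialIdealW K n w J) : Th w J 0 g = g := by
  conv_lhs => rw [sum_piq w g]
  conv_rhs => rw [sum_piq w g]
  rw [map_sum]
  refine Finset.sum_congr rfl fun q _ => ?_
  ext m
  rw [coeff_piq]
  split_ifs with h
  · rw [← h]; exact coeff_Th_piq_eq w J hJ 0 g hg m
  · by_contra h0
    have h1 := coeff_Th_piq_ne w J 0 g m q h0
    apply h0
    rw [Th_piq, Eh, coeff_scale, zero_pow, zero_mul]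
    intro h2
    apply h
    refine Prod.ext h1.1 ?_
    simp only [qd]
    omega

theorem Th_inj (J : Ideal (PS K n)) (hJ : IsHomog K n J) (l : K) (g : PS K n)
    (hg : g ∈ initialIdealW K n w J) (h : Th w J l g = 0) : g = 0 := by
  by_contra hg0
  obtain ⟨m, hm, hmax⟩ := g.support.exists_max_image (wdeg n w) (support_nonempty.mpr hg0)
  have h1 := congrArg (coeff m) h
  rw [sum_piq w g, map_sum, coeff_sum, coeff_zero, Finset.sum_eq_single (qd w m)] at h1
  · rw [coeff_Th_piq_eq w J hJ l g hg] at h1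
    exact (mem_support_iff.mp hm) h1
  · intro q hq hne
    by_contra h0
    have h2 := coeff_Th_piq_ne w J l g m q h0
    obtain ⟨u, hu, rfl⟩ := Finset.mem_image.mp hq
    apply hne
    exact Prod.ext h2.1.symm (le_antisymm (hmax u hu) h2.2)
  · intro hq
    exact absurd (Finset.mem_image_of_mem _ hm) hq

theorem mem_polyGrade_iff (d : ℕ) (f : PS K n) :
    f ∈ polyGrade K n d ↔ ∀ m, coeff m f ≠ 0 → m.degree = d := by
  unfold polyGrade
  rw [if_pos (by positivity), Int.toNat_natCast, mem_homogeneousSubmodule, IsHomogeneous,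
    IsWeightedHomogeneous]
  simp only [Finsupp.degree_eq_weight_one]
  exact Iff.rfl

theorem Th_grade (J : Ideal (PS K n)) (l : K) (g : PS K n) (d : ℤ)
    (hg : g ∈ polyGrade K n d) : Th w J l g ∈ polyGrade K n d := by
  by_cases hd : 0 ≤ d
  · lift d to ℕ using hd
    rw [mem_polyGrade_iff] at hg
    rw [sum_piq w g, map_sum]
    refine Submodule.sum_mem _ fun q hq => ?_
    obtain ⟨u, hu, rfl⟩ := Finset.mem_image.mp hq
    rw [mem_polyGrade_iff]
    intro m hm
    rw [(coeff_Th_piq_ne w J l g m _ hm).1]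
    exact hg u (mem_support_iff.mp hu)
  · rw [polyGrade_neg d (by omega), Submodule.mem_bot] at hg
    rw [hg, map_zero]; exact Submodule.zero_mem _

/-! diagonal -/

theorem coeff_diag (l : Kˣ) (f : PS K n) (m : Fin n →₀ ℕ) :
    coeff m (diagCoord K n w l f) = ((l⁻¹ : Kˣ) : K) ^ wdeg n w m * coeff m f := by
  rw [← coeff_scale (fun m => ((l⁻¹ : Kˣ) : K) ^ wdeg n w m)]
  congr 1
  have : (diagCoord K n w l).toLinearMap = scale (fun m => ((l⁻¹ : Kˣ) : K) ^ wdeg n w m) := by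
    apply (basisMonomials (Fin n) K).ext
    intro u
    rw [coe_basisMonomials, scale_monomial, AlgHom.toLinearMap_apply, diagCoord, aeval_monomial,
      map_one, one_mul, Finsupp.prod_fintype _ _ (fun i => pow_zero _), monomial_eq,
      Finsupp.prod_fintype _ _ (fun i => pow_zero _)]
    simp only [smul_eq_C_mul, mul_pow, Finset.prod_mul_distrib, wdeg, Finset.prod_pow_eq_pow_sum,
      ← map_pow, ← pow_mul, ← map_prod]
  exact LinearMap.congr_fun this f

theorem diag_surj (l : Kˣ) : Function.Surjective (diagCoord K n w l) := by
  intro f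
  refine ⟨diagCoord K n w l⁻¹ f, ?_⟩
  ext m
  rw [coeff_diag, coeff_diag, ← mul_assoc, ← mul_pow, inv_inv, Units.inv_mul, one_pow, one_mul]

theorem mem_map_diag (J : Ideal (PS K n)) (l : Kˣ) (x : PS K n) :
    x ∈ Ideal.map (diagCoord K n w l) J ↔ ∃ f ∈ J, diagCoord K n w l f = x :=
  Ideal.mem_map_iff_of_surjective _ (diag_surj w l)

theorem homog_diag (J : Ideal (PS K n)) (hJ : IsHomog K n J) (l : Kˣ) :
    IsHomog K n (Ideal.map (diagCoord K n w l) J) := by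
  intro x hx d
  rw [mem_map_diag] at hx
  obtain ⟨f, hf, rfl⟩ := hx
  rw [mem_map_diag]
  refine ⟨_, hJ f hf d, ?_⟩
  ext m
  rw [coeff_diag, coeff_homogeneousComponent, coeff_homogeneousComponent, coeff_diag, mul_ite,
    mul_zero]

theorem Eh_eq (J : Ideal (PS K n)) (q : ℕ × ℕ) (l : Kˣ) (f : PS K n) (hf : f ∈ FJ w J q) :
    Eh w q.2 (l : K) f = (l : K) ^ q.2 • diagCoord K n w l f := by
  ext m
  rw [Eh, coeff_scale, coeff_smul, coeff_diag, smul_eq_mul, ← mul_assoc]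
  by_cases h : coeff m f = 0
  · rw [h, mul_zero, mul_zero]
  · congr 1
    have := (hf.2 m h).2
    rw [Units.val_inv_eq_inv_val, inv_pow, pow_sub₀ _ l.ne_zero this]

theorem Th_mem (J : Ideal (PS K n)) (l : Kˣ) (g : PS K n) :
    Th w J l g ∈ Ideal.map (diagCoord K n w l) J := by
  rw [sum_piq w g, map_sum]
  refine Ideal.sum_mem _ fun q _ => ?_
  rw [Th_piq, Eh_eq w J q l _ (sg_mem w J q _)]
  exact Submodule.smul_of_tower_mem _ _ (Ideal.mem_map_of_mem _ (sg_mem w J q _).1)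

theorem Th_surj_step (J : Ideal (PS K n)) (l : Kˣ) (q : ℕ × ℕ) (f : PS K n)
    (hf : f ∈ FJ w J q) : ∃ g ∈ initialIdealW K n w J, g ∈ polyGrade K n q.1 ∧
      ∃ f1 ∈ FJ w J q, Th w J l g = diagCoord K n w l f1 ∧
        ∀ m, coeff m (f - f1) ≠ 0 → wdeg n w m < q.2 := by
  refine ⟨((l : K) ^ q.2)⁻¹ • piq K w q f,
    Submodule.smul_of_tower_mem _ _ (piq_mem_initial w J q f hf),
    Submodule.smul_mem _ _ ?_, sg w J q (piq K w q f), sg_mem w J q _, ?_, ?_⟩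
  · rw [mem_polyGrade_iff]
    intro m hm
    rw [coeff_piq] at hm
    have hq : qd w m = q := by by_contra h; rw [if_neg h] at hm; exact hm rfl
    rw [← hq]; rfl
  · rw [map_smul, Th_piq, Eh_eq w J q l _ (sg_mem w J q _), smul_smul, inv_mul_cancel₀, one_smul]
    exact pow_ne_zero _ l.ne_zero
  · intro m hm
    have h1 := (Submodule.sub_mem _ hf (sg_mem w J q (piq K w q f))).2 m hm
    refine lt_of_le_of_ne h1.2 fun h2 => hm ?_
    have hq : qd w m = q := Prod.ext h1.1 h2
    have h3 := congrArg (coeff m) (piq_sg w J q f hf)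
    rw [coeff_piq, coeff_piq, if_pos hq, if_pos hq] at h3
    rw [coeff_sub, h3, sub_self]

theorem Th_surj_aux (J : Ideal (PS K n)) (l : Kˣ) (d e : ℕ) :
    ∀ f ∈ FJ w J (d, e), ∃ g ∈ initialIdealW K n w J, g ∈ polyGrade K n d ∧
      Th w J l g = diagCoord K n w l f := by
  induction e with
  | zero =>
    intro f hf
    obtain ⟨g, hg, hgd, f1, hf1, hT, hlt⟩ := Th_surj_step w J l (d, 0) f hf
    refine ⟨g, hg, hgd, ?_⟩
    have : f - f1 = 0 := by
      ext m
      by_contra h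
      exact absurd (hlt m h) (Nat.not_lt_zero _)
    rw [hT, sub_eq_zero.mp this]
  | succ e ih =>
    intro f hf
    obtain ⟨g, hg, hgd, f1, hf1, hT, hlt⟩ := Th_surj_step w J l (d, e + 1) f hf
    have hsub := Submodule.sub_mem _ hf hf1
    obtain ⟨g', hg', hgd', hT'⟩ := ih (f - f1)
      ⟨hsub.1, fun m hm => ⟨(hsub.2 m hm).1, Nat.lt_succ_iff.mp (hlt m hm)⟩⟩
    refine ⟨g + g', Ideal.add_mem _ hg hg', Submodule.add_mem _ hgd hgd', ?_⟩
    rw [map_add, hT, hT', ← map_add, add_sub_cancel]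

theorem Th_surj_homog (J : Ideal (PS K n)) (l : Kˣ) (d : ℕ) (x : PS K n)
    (hx : x ∈ Ideal.map (diagCoord K n w l) J) (hxd : x ∈ polyGrade K n d) :
    ∃ g ∈ initialIdealW K n w J, g ∈ polyGrade K n d ∧ Th w J l g = x := by
  rw [mem_map_diag] at hx
  obtain ⟨f, hf, rfl⟩ := hx
  refine Th_surj_aux w J l d (f.support.sup (wdeg n w)) f ⟨hf, fun m hm => ⟨?_, ?_⟩⟩
  · rw [mem_polyGrade_iff] at hxd
    apply hxd
    rw [coeff_diag]
    exact mul_ne_zero (pow_ne_zero _ (Units.ne_zero _)) hm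
  · exact Finset.le_sup (f := wdeg n w) (mem_support_iff.mpr hm)

theorem Th_surj (J : Ideal (PS K n)) (hJ : IsHomog K n J) (l : Kˣ) (x : PS K n)
    (hx : x ∈ Ideal.map (diagCoord K n w l) J) :
    ∃ g ∈ initialIdealW K n w J, Th w J l g = x := by
  have h : ∀ d, ∃ g ∈ initialIdealW K n w J, Th w J l g = homogeneousComponent d x := by
    intro d
    obtain ⟨g, hg, -, h⟩ := Th_surj_homog w J l d _ (homog_diag w J hJ l x hx d)
      (homogeneousComponent_mem_polyGrade d x)
    exact ⟨g, hg, h⟩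
  choose g hg hgx using h
  refine ⟨∑ d ∈ Finset.range (x.totalDegree + 1), g d, Ideal.sum_mem _ fun d _ => hg d, ?_⟩
  rw [map_sum]
  simp only [hgx]
  exact sum_homogeneousComponent x

theorem exists_theta (J : Ideal (PS K n)) (hJ : IsHomog K n J) (l : Kˣ) :
    ∃ (θ : initialIdealW K n w J →ₗ[K] Ideal.map (diagCoord K n w l) J)
      (ψ : Ideal.map (diagCoord K n w l) J →ₗ[K] initialIdealW K n w J),
      (∀ g, (θ g : PS K n) = Th w J l g) ∧
      (∀ d, ∀ x ∈ idealGrade K n (initialIdealW K n w J) d,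
        θ x ∈ idealGrade K n (Ideal.map (diagCoord K n w l) J) d) ∧
      Function.Injective ψ ∧
      (∀ d, ∀ x ∈ idealGrade K n (Ideal.map (diagCoord K n w l) J) d,
        ψ x ∈ idealGrade K n (initialIdealW K n w J) d) := by
  let θ : initialIdealW K n w J →ₗ[K] Ideal.map (diagCoord K n w l) J :=
    { toFun := fun g => ⟨Th w J l g, Th_mem w J l g⟩
      map_add' := fun x y => Subtype.ext (map_add (Th w J (l : K)) _ _)
      map_smul' := fun c x => Subtype.ext (map_smul (Th w J (l : K)) c (x : PS K n)) }
  have hinj : Function.Injective θ := by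
    rw [injective_iff_map_eq_zero]
    intro g hg
    exact Subtype.ext (Th_inj w J hJ l g g.2 (congrArg Subtype.val hg))
  have hsurj : Function.Surjective θ := by
    intro x
    obtain ⟨g, hg, h⟩ := Th_surj w J hJ l x x.2
    exact ⟨⟨g, hg⟩, Subtype.ext h⟩
  let eq := LinearEquiv.ofBijective θ ⟨hinj, hsurj⟩
  refine ⟨θ, eq.symm.toLinearMap, fun g => rfl, fun d x hx => Th_grade w J l x d hx,
    eq.symm.injective, fun d x hx => ?_⟩
  by_cases hd : 0 ≤ d
  · lift d to ℕ using hd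
    obtain ⟨g, hg, hgd, h⟩ := Th_surj_homog w J l d x x.2 hx
    have : eq.symm x = ⟨g, hg⟩ := by
      rw [LinearEquiv.symm_apply_eq]
      exact Subtype.ext h.symm
    change eq.symm x ∈ _
    rw [this]
    exact hgd
  · rw [idealGrade_neg _ d (by omega), Submodule.mem_bot] at hx
    rw [hx, map_zero]; exact Submodule.zero_mem _

end Theta

end PartN6

section PartN7

section FG

variable {K} {n}

theorem eq_of_le_of_iSup_top {A : Type} [AddCommGroup A] [Module K A] {G V : ℤ → Submodule K A}
    (hG : iSupIndep G) (hV : ∀ d, V d ≤ G d) (htop : ⨆ d, V d = ⊤) (d : ℤ) : G d = V d := by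
  have h1 : (⊤ : Submodule K A) ≤ V d ⊔ ⨆ (j) (_ : j ≠ d), G j := by
    rw [← htop]
    refine iSup_le fun e => ?_
    by_cases he : e = d
    · subst he; exact le_sup_left
    · exact le_sup_of_le_right (le_trans (hV e) (le_iSup₂_of_le e he le_rfl))
  have h2 := sup_inf_assoc_of_le (⨆ (j) (_ : j ≠ d), G j) (hV d)
  rw [top_le_iff.mp h1, top_inf_eq, inf_comm, (hG d).eq_bot, sup_bot_eq] at h2
  exact h2

theorem HB_fg {Mod : Type} [AddCommGroup Mod] [Module K Mod] [Module (PS K n) Mod]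
    [IsScalarTower K (PS K n) Mod]
    (GMod : ℤ → Submodule K Mod) [DirectSum.Decomposition GMod]
    (hGMod : ∀ (a : ℕ) (b : ℤ) (s : PS K n) (x : Mod),
      s ∈ homogeneousSubmodule (Fin n) K a → x ∈ GMod b → s • x ∈ GMod ((a : ℤ) + b))
    (hModfg : Module.Finite (PS K n) Mod) :
    ∃ a : ℤ, HB GMod a ∧ ∀ d < a, GMod d = ⊥ := by
  classical
  obtain ⟨s, hs⟩ := hModfg.fg_top
  let T : Finset (ℤ × Mod) := s.biUnion fun x =>
    (DirectSum.decompose GMod x).support.image fun d => (d, (DirectSum.decompose GMod x d : Mod))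
  have hT : ∀ t ∈ T, t.2 ∈ GMod t.1 := by
    intro t ht
    obtain ⟨x, -, ht⟩ := Finset.mem_biUnion.mp ht
    obtain ⟨d, -, rfl⟩ := Finset.mem_image.mp ht
    exact (DirectSum.decompose GMod x d).2
  let gen : ℤ → Set Mod := fun d =>
    (fun p : (Fin n →₀ ℕ) × (ℤ × Mod) => (monomial p.1 (1 : K) : PS K n) • p.2.2) ''
      {p | p.2 ∈ T ∧ (p.1.degree : ℤ) + p.2.1 = d}
  let V : ℤ → Submodule K Mod := fun d => Submodule.span K (gen d)
  have hVG : ∀ d, V d ≤ GMod d := by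
    intro d
    refine Submodule.span_le.mpr ?_
    rintro _ ⟨⟨m, t⟩, ⟨ht, hd⟩, rfl⟩
    have := hGMod m.degree t.1 (monomial m 1) t.2 (isHomogeneous_monomial _ rfl) (hT t ht)
    simp only at hd
    rw [hd] at this
    exact this
  have hA : ∀ (p : PS K n), ∀ t ∈ T, p • t.2 ∈ ⨆ d, V d := by
    intro p t ht
    rw [as_sum p, Finset.sum_smul]
    refine Submodule.sum_mem _ fun m _ => ?_
    have h1 : monomial m (coeff m p) = coeff m p • (monomial m 1 : PS K n) := by
      rw [smul_monomial, smul_eq_mul, mul_one]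
    rw [h1, smul_assoc]
    refine Submodule.smul_mem _ _ (Submodule.mem_iSup_of_mem ((m.degree : ℤ) + t.1) ?_)
    exact Submodule.subset_span ⟨(m, t), ⟨ht, rfl⟩, rfl⟩
  have hsm : ∀ (p : PS K n), ∀ x ∈ ⨆ d, V d, p • x ∈ ⨆ d, V d := by
    intro p x hx
    induction hx using Submodule.iSup_induction' with
    | mem d x hx =>
      induction hx using Submodule.span_induction with
      | mem x hx =>
        obtain ⟨⟨m, t⟩, ⟨ht, -⟩, rfl⟩ := hx
        simp only [← mul_smul]
        exact hA _ t ht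
      | zero => rw [smul_zero]; exact Submodule.zero_mem _
      | add x y _ _ hx hy => rw [smul_add]; exact Submodule.add_mem _ hx hy
      | smul c x _ hx => rw [smul_comm]; exact Submodule.smul_mem _ _ hx
    | zero => rw [smul_zero]; exact Submodule.zero_mem _
    | add x y _ _ hx hy => rw [smul_add]; exact Submodule.add_mem _ hx hy
  have htop : ⨆ d, V d = ⊤ := by
    rw [eq_top_iff]
    intro x _
    have hx : x ∈ Submodule.span (PS K n) (s : Set Mod) := by rw [hs]; trivial
    induction hx using Submodule.span_induction with
    | mem x hx =>
      rw [← DirectSum.sum_support_decompose GMod x]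
      refine Submodule.sum_mem _ fun d hd => ?_
      have := hA 1 (d, (DirectSum.decompose GMod x d : Mod))
        (Finset.mem_biUnion.mpr ⟨x, hx, Finset.mem_image_of_mem _ hd⟩)
      rw [one_smul] at this
      exact this
    | zero => exact Submodule.zero_mem _
    | add x y _ _ hx hy => exact Submodule.add_mem _ (hx trivial) (hy trivial)
    | smul p x _ hx => exact hsm p x (hx trivial)
  have hIntern := DirectSum.Decomposition.isInternal GMod
  have hGV : ∀ d, GMod d = V d := eq_of_le_of_iSup_top hIntern.submodule_iSupIndep hVG htop
  obtain ⟨a, ha⟩ : ∃ a : ℤ, ∀ t ∈ T, a ≤ t.1 := by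
    obtain ⟨a, ha⟩ := (T.image Prod.fst).bddBelow
    exact ⟨a, fun t ht => ha (Finset.mem_image_of_mem _ ht)⟩
  have hlow : ∀ d < a, GMod d = ⊥ := by
    intro d hd
    rw [hGV, Submodule.span_eq_bot]
    rintro _ ⟨⟨m, t⟩, ⟨ht, h⟩, rfl⟩
    have := ha t ht
    simp only at h
    omega
  refine ⟨a, HB.of_internal hIntern ?_ hlow, hlow⟩
  intro d
  rw [hGV]
  refine FiniteDimensional.span_of_finite K (Set.Finite.image _ ?_)
  refine Set.Finite.subset
    ((Finsupp.finite_of_degree_le (σ := Fin n) (d - a).toNat).prod T.finite_toSet) ?_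
  rintro ⟨m, t⟩ ⟨ht, h⟩
  refine ⟨?_, ht⟩
  have := ha t ht
  simp only at h
  change m.degree ≤ _
  omega

theorem GrComp_of {Mod : Type} [AddCommGroup Mod] [Module K Mod] [Module (PS K n) Mod]
    (GMod : ℤ → Submodule K Mod)
    (hGMod : ∀ (a : ℕ) (b : ℤ) (s : PS K n) (x : Mod),
      s ∈ homogeneousSubmodule (Fin n) K a → x ∈ GMod b → s • x ∈ GMod ((a : ℤ) + b)) :
    GrComp (n := n) GMod := by
  intro a b s x hs hx
  by_cases ha : 0 ≤ a
  · lift a to ℕ using ha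
    unfold polyGrade at hs
    rw [if_pos (by positivity), Int.toNat_natCast] at hs
    exact hGMod a b s x hs hx
  · rw [polyGrade_neg a (by omega), Submodule.mem_bot] at hs
    rw [hs, zero_smul]; exact Submodule.zero_mem _

theorem main_aux (j : ℤ) (w : Fin n → ℕ)
    (Mod : Type) [AddCommGroup Mod] [Module K Mod] [Module (PS K n) Mod]
    [IsScalarTower K (PS K n) Mod]
    (GMod : ℤ → Submodule K Mod) [DirectSum.Decomposition GMod]
    (hGMod : ∀ (a : ℕ) (b : ℤ) (s : PS K n) (x : Mod),
      s ∈ homogeneousSubmodule (Fin n) K a → x ∈ GMod b → s • x ∈ GMod ((a : ℤ) + b))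
    (hModfg : Module.Finite (PS K n) Mod)
    (J : Ideal (PS K n)) (hJ : IsHomog K n J) :
    generallyScalar K (fun l => ∀ i : ℕ,
      torStrandDim K n ↥(Ideal.map (diagCoord K n w l) J) Mod
          GMod (idealGrade K n (Ideal.map (diagCoord K n w l) J)) i j ≤
        torStrandDim K n ↥(initialIdealW K n w J) Mod
          GMod (idealGrade K n (initialIdealW K n w J)) i j) := by
  obtain ⟨a, hM, hlow⟩ := HB_fg (n := n) GMod hGMod hModfg
  have hMc := GrComp_of GMod hGMod
  have hI0 := initial_homog w J hJ
  have hR := fun i => rank_semi hM (initialIdealW K n w J) hI0 (Th w J) (PolyFam_Th w J)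
    (Th_zero w J hJ) i j
  choose F hF hFl using hR
  let B : ℕ := (j - a).toNat + 3
  refine ⟨∏ i ∈ Finset.range B, F i, Finset.prod_ne_zero_iff.mpr fun i _ => hF i, ?_⟩
  intro l hl
  rw [Polynomial.eval_prod, Finset.prod_ne_zero_iff] at hl
  obtain ⟨θ, ψ, hθ, hθg, hψ, hψg⟩ := exists_theta w J hJ l
  have hI := homog_diag w J hJ l
  have hr : ∀ i < B, strandRank (n := n) GMod (idealGrade K n (initialIdealW K n w J)) i j ≤
      strandRank (n := n) GMod (idealGrade K n (Ideal.map (diagCoord K n w l) J)) i j :=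
    fun i hi => hFl i l (hl i (Finset.mem_range.mpr hi)) _ hI θ hθ hθg
  have hd := fun i => strand_dim_le (n := n) hM (HB_ideal _ hI0) ψ hψ hψg i j
  intro i
  cases i with
  | zero =>
    rw [tor_zero hM (HB_ideal _ hI) hMc (GrComp_ideal _) j,
      tor_zero hM (HB_ideal _ hI0) hMc (GrComp_ideal _) j]
    have := hr 0 (by omega)
    have := hd 0
    omega
  | succ i =>
    by_cases hi : j - a < i
    · rw [tor_vanish hM hlow (HB_ideal _ hI) (idealGrade_neg _) hMc (GrComp_ideal _) j i hi]
      exact Nat.zero_le _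
    · rw [tor_succ hM (HB_ideal _ hI) hMc (GrComp_ideal _) i j,
        tor_succ hM (HB_ideal _ hI0) hMc (GrComp_ideal _) i j]
      have := hr i (by omega)
      have := hr (i + 1) (by omega)
      have := hd (i + 1)
      omega

end FG

end PartN7

/-- **Corollary 2.5** (Caviglia–Murai): fix `j ∈ ℤ`, a weight `w ∈ ℤ_{≥0}^n`, a finitely
generated graded `S`-module `M` and a homogeneous ideal `J ⊆ S`.  For a general `λ ∈ K`,
`dim_K Tor_i(M, in_w(J))_j ≥ dim_K Tor_i(M, D_{λ,w}(J))_j` for all `i`. -/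
theorem tor_dim_initial_weight_ideal_ge [Infinite K] (j : ℤ) (w : Fin n → ℕ)
    (Mod : Type) [AddCommGroup Mod] [Module K Mod] [Module (PS K n) Mod]
    [IsScalarTower K (PS K n) Mod]
    (GMod : ℤ → Submodule K Mod) [DirectSum.Decomposition GMod]
    (hGMod : ∀ (a : ℕ) (b : ℤ) (s : PS K n) (x : Mod),
      s ∈ homogeneousSubmodule (Fin n) K a → x ∈ GMod b → s • x ∈ GMod ((a : ℤ) + b))
    (hModfg : Module.Finite (PS K n) Mod)
    (J : Ideal (PS K n)) (hJ : IsHomog K n J) :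
    generallyScalar K (fun l => ∀ i : ℕ,
      torStrandDim K n ↥(Ideal.map (diagCoord K n w l) J) Mod
          GMod (idealGrade K n (Ideal.map (diagCoord K n w l) J)) i j ≤
        torStrandDim K n ↥(initialIdealW K n w J) Mod
          GMod (idealGrade K n (initialIdealW K n w J)) i j) := by
  exact main_aux j w Mod GMod hGMod hModfg J hJ

end
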